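/- arXiv:2108.13532 — 4 statements merged into one kernel-verified Lean document; each statement's English description precedes it below -/
import Mathlib

section
/- For every real number T, the integral over t ∈ ℝ of t·sinh(πt)·∏_{ε₁,ε₂∈{+1,−1}} B(1/4 + ε₁·i·t/2 + ε₂·i·T, 1/4 − ε₁·i·t/2) dt equals 8π³. -/
open MeasureTheory Complex

/-- The Beta function of complex arguments, `B(x,y) = Γ(x)Γ(y)/Γ(x+y)`. -/
noncomputable def complexBeta (x y : ℂ) : ℂ :=
  Complex.Gamma x * Complex.Gamma y / Complex.Gamma (x + y)

/-! This is the case `a, b, c, d = 1/4 + iT, 1/4 - iT, 1/4, 1/4` of Wilson's integral, which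
evaluates `J(a, b, c, d) = ∫ z sin(2πz) ∏ Γ(x + z) Γ(x - z)` over `z ∈ iℝ`, the product running over
the parameters `x`, as `-2π²` times `R = ∏ Γ(x + y) / Γ(a + b + c + d)`, with `x, y` running over
the pairs of parameters.

By Cauchy's theorem `sin(2πz) ∏ Γ(x + 1/2 + z) Γ(x + 1/2 - z)` has the same integral over `Re z =
1/2` and over `Re z = -1/2`. The functional equation of `Γ` turns this into a recurrence relating
`J(a + 1, b, c, d)` to `J(a, b, c, d)`, which `R` satisfies too; so `J / R` is unchanged under `a ↦
a + 1`. Since `Γ(s + n + 1) ∼ n^s n!`, the limit of `J / R` at `(a + n, b, c, d)` as `n → ∞` does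
not involve `a`. By symmetry `J / R` is constant, and at `a = b = c = d = 1/2` the reflection
formula makes `J` an elementary integral. All convergence questions are settled by the exponential
decay of `Γ` on vertical strips, which comes from rotating the ray in Euler's integral. -/

open Filter Topology Set Asymptotics
open scoped Real

/-- `F` decays (or, for negative `r`, grows at most) like `exp (-r |Im z|)`, uniformly on the union
of the vertical lines `Re z = x` with `x ∈ K`. -/
def StripDecay (K : Set ℝ) (r : ℝ) (F : ℂ → ℂ) : Prop :=
  F =O[𝓟 (re ⁻¹' K)] fun z ↦ Real.exp (-(r * |z.im|))

section StripDecay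

variable {K L : Set ℝ} {r s : ℝ} {F G : ℂ → ℂ}

lemma stripDecay_iff :
    StripDecay K r F ↔ ∃ C, ∀ z : ℂ, z.re ∈ K → ‖F z‖ ≤ C * Real.exp (-(r * |z.im|)) := by
  simp [StripDecay, isBigO_principal]

lemma StripDecay.mul (hF : StripDecay K r F) (hG : StripDecay K s G) :
    StripDecay K (r + s) fun z ↦ F z * G z := by
  refine (IsBigO.mul hF hG).congr_right fun z ↦ ?_
  rw [← Real.exp_add]
  ring_nf

lemma StripDecay.multiset_prod {ι : Type*} {S : Multiset ι} {F : ι → ℂ → ℂ}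
    (hF : ∀ i ∈ S, StripDecay K r (F i)) :
    StripDecay K (Multiset.card S * r) fun z ↦ (S.map (F · z)).prod := by
  refine (IsBigO.multisetProd hF).congr_right fun z ↦ ?_
  rw [Multiset.map_const', Multiset.prod_replicate, ← Real.exp_nat_mul]
  ring_nf

lemma StripDecay.comp {g : ℂ → ℂ} {M : ℝ} (hF : StripDecay L r F)
    (hre : ∀ z : ℂ, z.re ∈ K → (g z).re ∈ L)
    (him : ∀ z : ℂ, z.re ∈ K → |(|(g z).im| - |z.im|)| ≤ M) :
    StripDecay K r fun z ↦ F (g z) := by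
  have hg : Tendsto g (𝓟 (re ⁻¹' K)) (𝓟 (re ⁻¹' L)) := tendsto_principal_principal.2 hre
  refine (IsBigO.comp_tendsto hF hg).trans (isBigO_principal.2 ⟨Real.exp (|r| * M), fun z hz ↦ ?_⟩)
  have hshift : -(r * (|(g z).im| - |z.im|)) ≤ |r| * M :=
    (neg_le_abs _).trans (by rw [abs_mul]; gcongr; exact him z hz)
  simp only [Function.comp_apply, Real.norm_eq_abs, Real.abs_exp, ← Real.exp_add]
  exact Real.exp_le_exp.2 (by linarith)

lemma stripDecay_cexp (hK : Bornology.IsBounded K) (c : ℂ) :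
    StripDecay K (-|c.im|) fun z ↦ cexp (c * z) := by
  obtain ⟨M, hM⟩ := isBounded_iff_forall_norm_le.1 hK
  refine stripDecay_iff.2 ⟨Real.exp (|c.re| * M), fun z hz ↦ ?_⟩
  have hre : c.re * z.re ≤ |c.re| * M :=
    (le_abs_self _).trans (by rw [abs_mul]; gcongr; exact hM _ hz)
  have him : -(c.im * z.im) ≤ |c.im| * |z.im| := by
    rw [← abs_mul]
    exact neg_le_abs _
  rw [norm_exp, ← Real.exp_add, mul_re]
  gcongr
  linarith

lemma stripDecay_sin (hK : Bornology.IsBounded K) (c : ℝ) :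
    StripDecay K (-|c|) fun z ↦ sin (c * z) := by
  have hexp : StripDecay K (-|c|) fun z ↦ cexp (-(c * I) * z) - cexp (c * I * z) := by
    have hpos : StripDecay K (-|c|) fun z ↦ cexp (c * I * z) := by
      simpa using stripDecay_cexp hK (c * I)
    have hneg : StripDecay K (-|c|) fun z ↦ cexp (-(c * I) * z) := by
      simpa using stripDecay_cexp hK (-(c * I))
    exact IsBigO.sub hneg hpos
  refine (hexp.const_mul_left (I / 2)).congr_left fun z ↦ ?_
  simp only [Complex.sin]
  ring_nf

lemma stripDecay_id_zero : StripDecay {0} (-1) fun z ↦ z := by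
  refine stripDecay_iff.2 ⟨1, fun z hz ↦ ?_⟩
  have him : ‖z‖ ≤ |z.im| := by simpa [mem_singleton_iff.1 hz] using norm_le_abs_re_add_abs_im z
  have hexp : |z.im| + 1 ≤ Real.exp (-(-1 * |z.im|)) := by
    simpa using Real.add_one_le_exp |z.im|
  linarith

lemma integrable_exp_neg_mul_abs (hr : 0 < r) :
    Integrable fun y : ℝ ↦ Real.exp (-(r * |y|)) := by
  rw [← integrableOn_univ, ← Iic_union_Ioi (a := (0 : ℝ))]
  refine IntegrableOn.union ?_ ?_
  · refine (integrableOn_exp_mul_Iic hr 0).congr_fun (fun y hy ↦ ?_) measurableSet_Iic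
    simp [abs_of_nonpos (mem_Iic.1 hy)]
  · refine (integrableOn_exp_mul_Ioi (neg_lt_zero.2 hr) 0).congr_fun (fun y hy ↦ ?_)
      measurableSet_Ioi
    simp [abs_of_pos (mem_Ioi.1 hy)]

lemma StripDecay.integrable_vertical (hF : StripDecay K r F) (hr : 0 < r) {p : ℝ} (hp : p ∈ K)
    (hcont : ∀ z : ℂ, z.re = p → ContinuousAt F z) : Integrable fun y : ℝ ↦ F (p + y * I) := by
  obtain ⟨C, hC⟩ := stripDecay_iff.1 hF
  have hline : Continuous fun y : ℝ ↦ F (p + y * I) := continuous_iff_continuousAt.2 fun y ↦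
    ContinuousAt.comp (f := fun y : ℝ ↦ (p + y * I : ℂ)) (hcont _ (by simp)) (by fun_prop)
  refine ((integrable_exp_neg_mul_abs hr).const_mul C).mono' hline.aestronglyMeasurable
    (ae_of_all _ fun y ↦ ?_)
  simpa using hC (p + y * I) (by simpa)

variable {p q : ℝ}

lemma StripDecay.tendsto_integral_horizontal (hF : StripDecay (uIcc p q) r F) (hr : 0 < r)
    {l : Filter ℝ} (hl : Tendsto (|·|) l atTop) :
    Tendsto (fun R : ℝ ↦ ∫ x in p..q, F (x + R * I)) l (𝓝 0) := by
  obtain ⟨C, hC⟩ := stripDecay_iff.1 hF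
  have hbound : Tendsto (fun R : ℝ ↦ C * Real.exp (-(r * |R|)) * |q - p|) l (𝓝 0) := by
    simpa using ((Real.tendsto_exp_neg_atTop_nhds_zero.comp
      (hl.const_mul_atTop hr)).const_mul C).mul_const |q - p|
  refine squeeze_zero_norm (fun R ↦ ?_) hbound
  refine intervalIntegral.norm_integral_le_of_norm_le_const fun x hx ↦ ?_
  simpa using hC (x + R * I) (by simpa using uIoc_subset_uIcc hx)

theorem StripDecay.integral_vertical_eq (hF : StripDecay (uIcc p q) r F) (hr : 0 < r)
    (hdiff : ∀ z : ℂ, z.re ∈ uIcc p q → DifferentiableAt ℂ F z) :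
    ∫ y : ℝ, F (p + y * I) = ∫ y : ℝ, F (q + y * I) := by
  have hline {x : ℝ} (hx : x ∈ uIcc p q) :
      Tendsto (fun R : ℝ ↦ ∫ y in -R..R, F (x + y * I)) atTop (𝓝 (∫ y : ℝ, F (x + y * I))) :=
    intervalIntegral_tendsto_integral
      (hF.integrable_vertical hr hx fun z hz ↦ (hdiff z (hz ▸ hx)).continuousAt)
      tendsto_neg_atTop_atBot tendsto_id
  have hrect (R : ℝ) : (∫ x in p..q, F (x + (-R : ℝ) * I)) - (∫ x in p..q, F (x + R * I)) +
      I * (∫ y in -R..R, F (q + y * I)) - I * (∫ y in -R..R, F (p + y * I)) = 0 := by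
    simpa using integral_boundary_rect_eq_zero_of_differentiableOn F ⟨p, -R⟩ ⟨q, R⟩
      fun z hz ↦ (hdiff z (mem_reProdIm.1 hz).1).differentiableWithinAt
  have hbottom := (hF.tendsto_integral_horizontal hr tendsto_abs_atBot_atTop).comp
    tendsto_neg_atTop_atBot
  have htop := hF.tendsto_integral_horizontal hr tendsto_abs_atTop_atTop
  have hlim := ((hbottom.sub htop).add ((hline right_mem_uIcc).const_mul I)).sub
    ((hline left_mem_uIcc).const_mul I)
  have hzero := tendsto_nhds_unique (hlim.congr hrect) tendsto_const_nhds
  refine mul_left_cancel₀ I_ne_zero ?_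
  linear_combination -hzero

theorem StripDecay.integral_central_difference (hF : StripDecay (Icc (-1 / 2) (1 / 2)) r F)
    (hr : 0 < r) (hdiff : ∀ z : ℂ, z.re ∈ Icc (-1 / 2) (1 / 2) → DifferentiableAt ℂ F z) :
    ∫ y : ℝ, (F (y * I + 1 / 2) - F (y * I - 1 / 2)) = 0 := by
  rw [← uIcc_of_le (by norm_num)] at hF hdiff
  have hline {x : ℝ} (hx : x ∈ uIcc (-1 / 2) (1 / 2 : ℝ)) : Integrable fun y : ℝ ↦ F (x + y * I) :=
    hF.integrable_vertical hr hx fun z hz ↦ (hdiff z (hz ▸ hx)).continuousAt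
  have hshift := hF.integral_vertical_eq hr hdiff
  rw [← sub_eq_zero, ← integral_sub (hline left_mem_uIcc) (hline right_mem_uIcc)] at hshift
  rw [← neg_zero, ← hshift, ← integral_neg]
  refine integral_congr_ae (ae_of_all _ fun y ↦ ?_)
  push_cast
  ring_nf

end StripDecay

section GammaDecay

lemma integral_exp_smul_comp_exp {E : Type*} [NormedAddCommGroup E] [NormedSpace ℝ E]
    (g : ℝ → E) : ∫ u : ℝ, Real.exp u • g (Real.exp u) = ∫ x in Ioi 0, g x := by
  have hsubst := integral_image_eq_integral_abs_deriv_smul MeasurableSet.univ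
    (fun u _ ↦ (Real.hasDerivAt_exp u).hasDerivWithinAt) Real.exp_injective.injOn g
  simpa [image_univ, Real.range_exp, abs_of_pos (Real.exp_pos _)] using hsubst.symm

lemma integral_exp_mul_sub_mul_exp {σ c : ℝ} (hσ : 0 < σ) (hc : 0 < c) :
    ∫ u : ℝ, Real.exp (σ * u - c * Real.exp u) = (1 / c) ^ σ * Real.Gamma σ := by
  rw [← Real.integral_rpow_mul_exp_neg_mul_Ioi hσ hc, ← integral_exp_smul_comp_exp]
  refine integral_congr_ae (ae_of_all _ fun u ↦ ?_)
  simp only [smul_eq_mul, ← Real.exp_mul, ← Real.exp_add]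
  ring_nf

/-- The integrand of `Γ(s) = ∫ exp (s w - exp w) dw`, with the line of integration turned from
`w ∈ ℝ` to `z = I * w ∈ I ℝ`. -/
noncomputable def gammaKernel (s z : ℂ) : ℂ :=
  cexp (s * -(I * z) - cexp (-(I * z)))

lemma norm_gammaKernel (s z : ℂ) :
    ‖gammaKernel s z‖ =
      Real.exp (s.im * z.re + (s.re * z.im - Real.cos z.re * Real.exp z.im)) := by
  rw [gammaKernel, norm_exp]
  congr 1
  simp [exp_re]
  ring

lemma differentiable_gammaKernel (s : ℂ) : Differentiable ℂ (gammaKernel s) := by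
  unfold gammaKernel
  fun_prop

lemma integral_gammaKernel {s : ℂ} (hs : 0 < s.re) :
    ∫ u : ℝ, gammaKernel s (u * I) = Gamma s := by
  rw [Gamma_eq_integral hs, GammaIntegral, ← integral_exp_smul_comp_exp]
  refine integral_congr_ae (ae_of_all _ fun u ↦ ?_)
  have hrot : -(I * (u * I)) = (u : ℂ) := by linear_combination -(u : ℂ) * I_mul_I
  have hpow : (Real.exp u : ℂ) ^ (s - 1) = cexp (u * (s - 1)) := by
    rw [cpow_def_of_ne_zero (ofReal_ne_zero.2 (Real.exp_ne_zero u)),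
      ← ofReal_log (Real.exp_pos u).le, Real.log_exp]
  simp only [gammaKernel, hrot, hpow, real_smul]
  push_cast
  rw [← Complex.exp_add, ← Complex.exp_add]
  ring_nf

lemma exists_mul_sub_mul_exp_le {σ c : ℝ} (hσ : 0 < σ) (hc : 0 < c) :
    ∃ A, ∀ y : ℝ, σ * y - c * Real.exp y ≤ A - σ * |y| := by
  refine ⟨|2 * σ * Real.log (2 * σ / c)|, fun y ↦ ?_⟩
  rcases le_total y 0 with hy | hy
  · have hexp : 0 ≤ c * Real.exp y := by positivity
    rw [abs_of_nonpos hy]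
    linarith [abs_nonneg (2 * σ * Real.log (2 * σ / c))]
  · have htangent : 2 * σ * (y - Real.log (2 * σ / c) + 1) ≤ c * Real.exp y := by
      calc 2 * σ * (y - Real.log (2 * σ / c) + 1)
          ≤ 2 * σ * Real.exp (y - Real.log (2 * σ / c)) := by
            gcongr
            exact Real.add_one_le_exp _
        _ = c * Real.exp y := by
            rw [Real.exp_sub, Real.exp_log (by positivity)]
            field_simp
    rw [abs_of_nonneg hy]
    linarith [le_abs_self (2 * σ * Real.log (2 * σ / c))]

variable {s : ℂ} {θ : ℝ}

lemma stripDecay_gammaKernel (hs : 0 < s.re) (hθ : |θ| < π / 2) :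
    StripDecay (uIcc 0 θ) s.re (gammaKernel s) := by
  obtain ⟨A, hA⟩ := exists_mul_sub_mul_exp_le hs (Real.cos_pos_of_mem_Ioo (abs_lt.1 hθ))
  refine stripDecay_iff.2 ⟨Real.exp (|s.im| * |θ| + A), fun z hz ↦ ?_⟩
  have hzθ : |z.re| ≤ |θ| := by simpa using abs_sub_left_of_mem_uIcc hz
  have him : s.im * z.re ≤ |s.im| * |θ| :=
    (le_abs_self _).trans (by rw [abs_mul]; gcongr)
  have hcos : Real.cos θ * Real.exp z.im ≤ Real.cos z.re * Real.exp z.im := by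
    rw [← Real.cos_abs θ, ← Real.cos_abs z.re]
    gcongr
    exact Real.cos_le_cos_of_nonneg_of_le_pi (abs_nonneg _)
      (by linarith [Real.pi_pos]) hzθ
  rw [norm_gammaKernel, ← Real.exp_add]
  exact Real.exp_le_exp.2 (by linarith [hA z.im])

/-- Rotate the ray of integration in Euler's integral through the angle `-θ`. -/
theorem norm_Gamma_le (hs : 0 < s.re) (hθ : |θ| < π / 2) :
    ‖Gamma s‖ ≤ Real.exp (s.im * θ) * ((1 / Real.cos θ) ^ s.re * Real.Gamma s.re) := by
  have hcos : 0 < Real.cos θ := Real.cos_pos_of_mem_Ioo (abs_lt.1 hθ)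
  have hrotate := (stripDecay_gammaKernel hs hθ).integral_vertical_eq hs
    fun z _ ↦ differentiable_gammaKernel s z
  calc ‖Gamma s‖ = ‖∫ u : ℝ, gammaKernel s (θ + u * I)‖ := by
        rw [← integral_gammaKernel hs, ← hrotate]
        simp
    _ ≤ ∫ u : ℝ, ‖gammaKernel s (θ + u * I)‖ := norm_integral_le_integral_norm _
    _ = ∫ u : ℝ, Real.exp (s.im * θ) * Real.exp (s.re * u - Real.cos θ * Real.exp u) := by
        simp [norm_gammaKernel, Real.exp_add]
    _ = _ := by rw [integral_const_mul, integral_exp_mul_sub_mul_exp hs hcos]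

theorem stripDecay_Gamma {K : Set ℝ} (hK : IsCompact K) (hKpos : K ⊆ Ioi 0) (hθ₀ : 0 ≤ θ)
    (hθ : θ < π / 2) : StripDecay K θ Gamma := by
  have hcont : ContinuousOn (fun x ↦ (1 / Real.cos θ) ^ x * Real.Gamma x) K := fun x hx ↦ by
    have hx : 0 < x := hKpos hx
    have hcos : 0 < Real.cos θ := Real.cos_pos_of_mem_Ioo ⟨by linarith, hθ⟩
    have hGamma : ContinuousAt Real.Gamma x := (Real.differentiableAt_Gamma fun m ↦ by
      linarith [(m.cast_nonneg : (0 : ℝ) ≤ m)]).continuousAt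
    exact ((Real.continuousAt_const_rpow (by positivity)).mul hGamma).continuousWithinAt
  obtain ⟨C, hC⟩ := hK.exists_bound_of_continuousOn hcont
  refine stripDecay_iff.2 ⟨C, fun s hs ↦ ?_⟩
  obtain ⟨φ, hφ, hsφ⟩ : ∃ φ, |φ| = θ ∧ s.im * φ = -(θ * |s.im|) := by
    rcases le_total s.im 0 with him | him
    · exact ⟨θ, abs_of_nonneg hθ₀, by rw [abs_of_nonpos him]; ring⟩
    · exact ⟨-θ, by rw [abs_neg, abs_of_nonneg hθ₀], by rw [abs_of_nonneg him]; ring⟩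
  have hbound := norm_Gamma_le (hKpos hs) (hφ ▸ hθ)
  rw [hsφ, ← Real.cos_abs φ, hφ, mul_comm] at hbound
  refine hbound.trans ?_
  gcongr
  exact (Real.le_norm_self _).trans (hC _ hs)

end GammaDecay

section GammaProd

/-- The product `Γ(a + z) Γ(a - z)`, which is `|Γ(a + i y)|²` for real `a` and `z = i y`. -/
noncomputable def gammaPair (a z : ℂ) : ℂ :=
  Gamma (a + z) * Gamma (a - z)

/-- The product of `Γ(a + z) Γ(a - z)` over all parameters `a ∈ S`. The parameters form a multiset
because the Wilson integral is symmetric in them and they may coincide. -/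
noncomputable def gammaProd (S : Multiset ℂ) (z : ℂ) : ℂ :=
  (S.map (gammaPair · z)).prod

@[simp]
lemma gammaProd_cons (a : ℂ) (S : Multiset ℂ) (z : ℂ) :
    gammaProd (a ::ₘ S) z = gammaPair a z * gammaProd S z := by
  simp [gammaProd]

@[simp]
lemma gammaProd_singleton (a z : ℂ) : gammaProd {a} z = gammaPair a z := by
  simp [gammaProd]

variable {a z : ℂ} {K : Set ℝ} {S : Multiset ℂ}

lemma re_add_pos_of_abs_re_lt (hz : |z.re| < a.re) : 0 < (a + z).re := by
  rw [add_re]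
  linarith [neg_lt_of_abs_lt hz]

lemma re_sub_pos_of_abs_re_lt (hz : |z.re| < a.re) : 0 < (a - z).re := by
  rw [sub_re]
  linarith [lt_of_abs_lt hz]

lemma gammaPair_add_one (hz : |z.re| < a.re) :
    gammaPair (a + 1) z = (a ^ 2 - z ^ 2) * gammaPair a z := by
  have hadd : a + z ≠ 0 := ne_zero_of_re_pos (re_add_pos_of_abs_re_lt hz)
  have hsub : a - z ≠ 0 := ne_zero_of_re_pos (re_sub_pos_of_abs_re_lt hz)
  rw [gammaPair, add_right_comm, Gamma_add_one _ hadd, add_sub_right_comm, Gamma_add_one _ hsub,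
    gammaPair]
  ring

lemma gammaPair_add_half_add_half (hz : 0 < (a + z).re) :
    gammaPair (a + 1 / 2) (z + 1 / 2) = (a + z) * gammaPair a z := by
  rw [gammaPair, add_sub_add_right_eq_sub, show a + 1 / 2 + (z + 1 / 2) = a + z + 1 by ring,
    Gamma_add_one _ (ne_zero_of_re_pos hz), gammaPair, mul_assoc]

lemma gammaPair_add_half_sub_half (hz : 0 < (a - z).re) :
    gammaPair (a + 1 / 2) (z - 1 / 2) = (a - z) * gammaPair a z := by
  rw [gammaPair, show a + 1 / 2 + (z - 1 / 2) = a + z by ring,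
    show a + 1 / 2 - (z - 1 / 2) = a - z + 1 by ring,
    Gamma_add_one _ (ne_zero_of_re_pos hz), gammaPair]
  ring

lemma gammaPair_one_half (z : ℂ) : gammaPair (1 / 2) z = π / cos (π * z) := by
  have hcos : sin (π * (1 / 2 + z)) = cos (π * z) := by
    rw [← Complex.sin_pi_div_two_sub, ← Complex.sin_pi_sub]
    ring_nf
  rw [gammaPair, show 1 / 2 - z = 1 - (1 / 2 + z) by ring, Gamma_mul_Gamma_one_sub, hcos]

lemma differentiableAt_gammaPair (hz : |z.re| < a.re) : DifferentiableAt ℂ (gammaPair a) z := by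
  have hGamma {w : ℂ} (hw : 0 < w.re) : DifferentiableAt ℂ Gamma w :=
    differentiableAt_Gamma _ fun m hm ↦ by
      rw [hm, neg_re, natCast_re] at hw
      linarith [(m.cast_nonneg : (0 : ℝ) ≤ m)]
  exact ((hGamma (re_add_pos_of_abs_re_lt hz)).comp z (by fun_prop)).mul
    ((hGamma (re_sub_pos_of_abs_re_lt hz)).comp z (by fun_prop))

lemma differentiableAt_gammaProd (hS : ∀ a ∈ S, |z.re| < a.re) :
    DifferentiableAt ℂ (gammaProd S) z := by
  induction S using Multiset.induction_on with
  | empty => exact differentiableAt_const _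
  | cons a S ih =>
    rw [Multiset.forall_mem_cons] at hS
    exact ((differentiableAt_gammaPair hS.1).mul (ih hS.2)).congr_of_eventuallyEq
      (Eventually.of_forall (gammaProd_cons a S))

lemma stripDecay_gammaPair (hK : IsCompact K) (ha : ∀ x ∈ K, |x| < a.re) {r : ℝ} (hr₀ : 0 ≤ r)
    (hr : r < π) : StripDecay K r (gammaPair a) := by
  have hadd : StripDecay K (r / 2) fun z ↦ Gamma (a + z) := by
    refine (stripDecay_Gamma (hK.image (f := (a.re + ·)) (by fun_prop)) ?_ (by positivity)
      (by linarith)).comp (M := |a.im|) (fun z hz ↦ ⟨z.re, hz, by simp⟩) fun z _ ↦ ?_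
    · rintro _ ⟨x, hx, rfl⟩
      exact mem_Ioi.2 (by linarith [neg_lt_of_abs_lt (ha x hx)])
    · simpa using abs_abs_sub_abs_le (a + z).im z.im
  have hsub : StripDecay K (r / 2) fun z ↦ Gamma (a - z) := by
    refine (stripDecay_Gamma (hK.image (f := (a.re - ·)) (by fun_prop)) ?_ (by positivity)
      (by linarith)).comp (M := |a.im|) (fun z hz ↦ ⟨z.re, hz, by simp⟩) fun z _ ↦ ?_
    · rintro _ ⟨x, hx, rfl⟩
      exact mem_Ioi.2 (by linarith [lt_of_abs_lt (ha x hx)])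
    · simpa using abs_abs_sub_abs_le (a - z).im (-z.im)
  rw [← add_halves r]
  exact hadd.mul hsub

lemma stripDecay_gammaProd (hK : IsCompact K) (hS : ∀ a ∈ S, ∀ x ∈ K, |x| < a.re) {r : ℝ}
    (hr₀ : 0 ≤ r) (hr : r < π) : StripDecay K (Multiset.card S * r) (gammaProd S) :=
  StripDecay.multiset_prod fun a ha ↦ stripDecay_gammaPair hK (hS a ha) hr₀ hr

lemma gammaProd_map_add_half_add_half (hS : ∀ a ∈ S, 0 < (a + z).re) :
    gammaProd (S.map (· + 1 / 2)) (z + 1 / 2) = (S.map (· + z)).prod * gammaProd S z := by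
  rw [gammaProd, gammaProd, ← Multiset.prod_map_mul, Multiset.map_map]
  exact congrArg _ (Multiset.map_congr rfl fun a ha ↦ gammaPair_add_half_add_half (hS a ha))

lemma gammaProd_map_add_half_sub_half (hS : ∀ a ∈ S, 0 < (a - z).re) :
    gammaProd (S.map (· + 1 / 2)) (z - 1 / 2) = (S.map (· - z)).prod * gammaProd S z := by
  rw [gammaProd, gammaProd, ← Multiset.prod_map_mul, Multiset.map_map]
  exact congrArg _ (Multiset.map_congr rfl fun a ha ↦ gammaPair_add_half_sub_half (hS a ha))

end GammaProd

section GammaShift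

/-- `Γ(s + n + 1)` divided by its leading asymptotics `n ^ s * n!` as `n → ∞`. -/
noncomputable def gammaShiftRatio (s : ℂ) (n : ℕ) : ℂ :=
  Gamma (s + (n + 1)) / (n ^ s * n.factorial)

variable {a s : ℂ} {n : ℕ}

lemma natCast_cpow_mul_factorial_ne_zero (hn : n ≠ 0) (s : ℂ) :
    (n : ℂ) ^ s * n.factorial ≠ 0 :=
  mul_ne_zero (by simp [cpow_eq_zero_iff, hn]) (mod_cast n.factorial_ne_zero)

lemma Gamma_add_natCast_add_one (hn : n ≠ 0) (s : ℂ) :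
    Gamma (s + (n + 1)) = gammaShiftRatio s n * (n ^ s * n.factorial) :=
  (div_mul_cancel₀ _ (natCast_cpow_mul_factorial_ne_zero hn s)).symm

lemma gammaShiftRatio_eq_Gamma_div_GammaSeq (hs : 0 < s.re) (n : ℕ) :
    gammaShiftRatio s n = Gamma s / GammaSeq s n := by
  have hprod : Gamma (s + (n + 1)) = (∏ j ∈ Finset.range (n + 1), (s + j)) * Gamma s := by
    induction n with
    | zero => simp [Gamma_add_one s (ne_zero_of_re_pos hs)]
    | succ n ih =>
      have hpos : 0 < (s + (n + 1)).re := by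
        simp only [add_re, natCast_re, one_re]
        positivity
      rw [Finset.prod_range_succ, mul_right_comm, ← ih]
      push_cast
      rw [mul_comm, ← add_assoc, Gamma_add_one _ (ne_zero_of_re_pos hpos)]
  rw [gammaShiftRatio, GammaSeq, hprod]
  field_simp

lemma tendsto_gammaShiftRatio (hs : 0 < s.re) : Tendsto (gammaShiftRatio s) atTop (𝓝 1) := by
  have hne : Gamma s ≠ 0 := Gamma_ne_zero_of_re_pos hs
  have hlim := (tendsto_const_nhds (x := Gamma s)).div (GammaSeq_tendsto_Gamma s) hne
  rw [div_self hne] at hlim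
  exact hlim.congr fun n ↦ (gammaShiftRatio_eq_Gamma_div_GammaSeq hs n).symm

lemma norm_gammaShiftRatio_le (hs : 0 < s.re) (hn : n ≠ 0) :
    ‖gammaShiftRatio s n‖ ≤ ‖gammaShiftRatio s.re n‖ := by
  have hpos : 0 < s.re + (n + 1) := by positivity
  have hGamma : ‖Gamma (s + (n + 1))‖ ≤ Real.Gamma (s.re + (n + 1)) := by
    simpa using norm_Gamma_le (s := s + (n + 1)) (θ := 0) (by simpa) (by simp [Real.pi_pos])
  have hGamma' : ‖Gamma (s.re + (n + 1))‖ = Real.Gamma (s.re + (n + 1)) := by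
    rw [show (s.re + (n + 1) : ℂ) = (s.re + (n + 1) : ℝ) by push_cast; rfl, Gamma_ofReal,
      norm_real, Real.norm_of_nonneg (Real.Gamma_pos_of_pos hpos).le]
  simp only [gammaShiftRatio, norm_div, norm_mul, norm_natCast_cpow_of_pos (Nat.pos_of_ne_zero hn),
    ofReal_re, hGamma']
  gcongr

lemma gammaPair_add_natCast_add_one_div (hn : n ≠ 0) (a z : ℂ) :
    gammaPair (a + (n + 1)) z / (n ^ a * n.factorial) ^ 2 =
      gammaShiftRatio (a + z) n * gammaShiftRatio (a - z) n := by
  have hpow : (n : ℂ) ^ (a + z) * n ^ (a - z) = (n ^ a) ^ 2 := by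
    rw [← cpow_add _ _ (mod_cast hn), sq, ← cpow_add _ _ (mod_cast hn)]
    ring_nf
  rw [div_eq_iff (pow_ne_zero 2 (natCast_cpow_mul_factorial_ne_zero hn a)), gammaPair,
    add_right_comm, add_sub_right_comm, Gamma_add_natCast_add_one hn,
    Gamma_add_natCast_add_one hn]
  linear_combination (gammaShiftRatio (a + z) n * gammaShiftRatio (a - z) n *
    (n.factorial : ℂ) ^ 2) * hpow

theorem tendsto_integral_gammaPair_div_mul (ha : 0 < a.re) {f : ℝ → ℂ} (hf : Integrable f) :
    Tendsto (fun n : ℕ ↦ ∫ y : ℝ, gammaPair (a + (n + 1)) (y * I) / (n ^ a * n.factorial) ^ 2 * f y)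
      atTop (𝓝 (∫ y, f y)) := by
  have hratio : ∀ᶠ n : ℕ in atTop, ‖gammaShiftRatio a.re n‖ ≤ 2 :=
    (tendsto_gammaShiftRatio (s := a.re) (by simpa)).norm.eventually_le_const (by simp)
  refine tendsto_integral_filter_of_dominated_convergence (fun y ↦ 2 * 2 * ‖f y‖)
    (Eventually.of_forall fun n ↦ ?_) ?_ (hf.norm.const_mul _) (ae_of_all _ fun y ↦ ?_)
  · have hpos : 0 < a.re + (n + 1) := by positivity
    have hcont : Continuous fun y : ℝ ↦ gammaPair (a + (n + 1)) (y * I) :=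
      continuous_iff_continuousAt.2 fun y ↦ ContinuousAt.comp (f := fun y : ℝ ↦ (y * I : ℂ))
        (differentiableAt_gammaPair (by simpa using hpos)).continuousAt (by fun_prop)
    exact (hcont.div_const _).aestronglyMeasurable.mul hf.aestronglyMeasurable
  · filter_upwards [hratio, eventually_ne_atTop 0] with n hn hn₀
    refine ae_of_all _ fun y ↦ ?_
    have hadd := norm_gammaShiftRatio_le (s := a + y * I) (by simpa) hn₀
    have hsub := norm_gammaShiftRatio_le (s := a - y * I) (by simpa) hn₀
    rw [gammaPair_add_natCast_add_one_div hn₀, norm_mul, norm_mul]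
    gcongr
    · exact hadd.trans (by simpa using hn)
    · exact hsub.trans (by simpa using hn)
  · have hadd := tendsto_gammaShiftRatio (s := a + y * I) (by simpa)
    have hsub := tendsto_gammaShiftRatio (s := a - y * I) (by simpa)
    have hlim := (hadd.mul hsub).mul_const (f y)
    rw [one_mul, one_mul] at hlim
    refine hlim.congr' ?_
    filter_upwards [eventually_ne_atTop 0] with n hn
    rw [gammaPair_add_natCast_add_one_div hn]

end GammaShift

section WilsonIntegral

/-- Wilson's weight in the variable `z = i y`; on the imaginary axis
`wilsonWeight S (y * I) = -y sinh (2 π y) ∏ Γ(a + i y) Γ(a - i y)`. -/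
noncomputable def wilsonWeight (S : Multiset ℂ) (z : ℂ) : ℂ :=
  z * sin (2 * π * z) * gammaProd S z

/-- The integral of Wilson's weight along the imaginary axis, taken with respect to the real
variable `y = Im z`. -/
noncomputable def wilsonIntegral (S : Multiset ℂ) : ℂ :=
  ∫ y : ℝ, wilsonWeight S (y * I)

variable {S : Multiset ℂ} {a b c d : ℂ}

-- Any rate between `2π + 1` and `3π` would do in place of `9`.
lemma stripDecay_sin_two_pi_mul_gammaProd {K : Set ℝ} (hK : IsCompact K)
    (hS : ∀ a ∈ S, ∀ x ∈ K, |x| < a.re) (hcard : 3 ≤ Multiset.card S) :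
    StripDecay K (9 - 2 * π) fun z ↦ sin (2 * π * z) * gammaProd S z := by
  have hcard' : (3 : ℝ) ≤ Multiset.card S := mod_cast hcard
  have hsin : StripDecay K (-(2 * π)) fun z ↦ sin (2 * π * z) := by
    simpa [abs_of_pos Real.pi_pos] using stripDecay_sin hK.isBounded (2 * π)
  have hprod : StripDecay K 9 (gammaProd S) := by
    have hrate : 9 / (Multiset.card S : ℝ) < π := by
      rw [div_lt_iff₀ (by linarith)]
      nlinarith [Real.pi_gt_three]
    simpa [mul_div_cancel₀ (9 : ℝ) (show (Multiset.card S : ℝ) ≠ 0 by linarith)] using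
      stripDecay_gammaProd hK hS (by positivity) hrate
  rw [sub_eq_neg_add]
  exact hsin.mul hprod

lemma integrable_wilsonWeight (hS : ∀ a ∈ S, 0 < a.re) (hcard : 3 ≤ Multiset.card S) :
    Integrable fun y : ℝ ↦ wilsonWeight S (y * I) := by
  have hdecay : StripDecay {0} (-1 + (9 - 2 * π)) (wilsonWeight S) := by
    refine (stripDecay_id_zero.mul (stripDecay_sin_two_pi_mul_gammaProd isCompact_singleton
      (by simpa using hS) hcard)).congr_left fun z ↦ ?_
    simp only [wilsonWeight, mul_assoc]
  have hcont (z : ℂ) (hz : z.re = (0 : ℝ)) : ContinuousAt (wilsonWeight S) z := by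
    have hprod := (differentiableAt_gammaProd (z := z) (by simpa [hz] using hS)).continuousAt
    unfold wilsonWeight
    fun_prop
  simpa using hdecay.integrable_vertical (by linarith [Real.pi_lt_d2]) (mem_singleton 0) hcont

theorem integral_sin_mul_prod_sub_prod_mul_gammaProd_eq_zero (hS : ∀ a ∈ S, 0 < a.re)
    (hcard : 3 ≤ Multiset.card S) :
    ∫ y : ℝ, sin (2 * π * (y * I)) *
      ((S.map (· + y * I)).prod - (S.map (· - y * I)).prod) * gammaProd S (y * I) = 0 := by
  have hmap : ∀ a ∈ S.map (· + 1 / 2), ∀ x ∈ Icc (-1 / 2 : ℝ) (1 / 2), |x| < a.re := by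
    simp only [Multiset.mem_map, forall_exists_index, and_imp, forall_apply_eq_imp_iff₂]
    intro a ha x hx
    have hle : |x| ≤ 1 / 2 := abs_le.2 ⟨by linarith [hx.1], hx.2⟩
    simpa using (by linarith [hS a ha] : |x| < a.re + 1 / 2)
  have hdecay := stripDecay_sin_two_pi_mul_gammaProd isCompact_Icc hmap (by simpa using hcard)
  have hvanish := hdecay.integral_central_difference (by linarith [Real.pi_lt_d2]) fun z hz ↦ by
    have hprod := differentiableAt_gammaProd fun a ha ↦ hmap a ha z.re hz
    fun_prop
  rw [← neg_eq_zero, ← integral_neg, ← hvanish]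
  refine integral_congr_ae (ae_of_all _ fun y ↦ ?_)
  simp only
  rw [gammaProd_map_add_half_add_half (by simpa using hS),
    gammaProd_map_add_half_sub_half (by simpa using hS),
    show 2 * π * (y * I + 1 / 2) = 2 * π * (y * I) + π by ring, Complex.sin_add_pi,
    show 2 * π * (y * I - 1 / 2) = 2 * π * (y * I) - π by ring, Complex.sin_sub_pi]
  ring

lemma wilsonIntegral_recurrence (ha : 0 < a.re) (hb : 0 < b.re) (hc : 0 < c.re) (hd : 0 < d.re) :
    (a + b + c + d) * wilsonIntegral {a + 1, b, c, d} =
      (a + b) * (a + c) * (a + d) * wilsonIntegral {a, b, c, d} := by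
  have hint : Integrable fun y : ℝ ↦ wilsonWeight {a, b, c, d} (y * I) :=
    integrable_wilsonWeight (by simp [ha, hb, hc, hd]) (by simp)
  have hint' : Integrable fun y : ℝ ↦ wilsonWeight {a + 1, b, c, d} (y * I) :=
    integrable_wilsonWeight (by simp [hb, hc, hd, add_pos ha one_pos]) (by simp)
  have hvanish := integral_sin_mul_prod_sub_prod_mul_gammaProd_eq_zero
    (S := {a, b, c, d}) (by simp [ha, hb, hc, hd]) (by simp)
  rw [← sub_eq_zero, wilsonIntegral, wilsonIntegral, ← integral_const_mul, ← integral_const_mul,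
    ← integral_sub (hint'.const_mul _) (hint.const_mul _), ← neg_eq_zero]
  -- `∏ (x + z) - ∏ (x - z) = 2z ((a + b)(a + c)(a + d) - (a + b + c + d)(a² - z²))`
  refine mul_left_cancel₀ (two_ne_zero (α := ℂ)) ?_
  rw [mul_zero, ← hvanish, ← integral_neg, ← integral_const_mul]
  refine integral_congr_ae (ae_of_all _ fun y ↦ ?_)
  simp only [wilsonWeight, Multiset.insert_eq_cons, gammaProd_cons, gammaProd_singleton,
    Multiset.map_cons, Multiset.prod_cons, Multiset.map_singleton, Multiset.prod_singleton,
    gammaPair_add_one (show |(y * I : ℂ).re| < a.re by simpa using ha)]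
  ring

/-- The value of the Wilson integral, up to the factor `-2π²`: the product of the `Γ(x + y)` over
the pairs of parameters, divided by `Γ(a + b + c + d)`. -/
noncomputable def wilsonGamma (a b c d : ℂ) : ℂ :=
  Gamma (a + b) * Gamma (a + c) * Gamma (a + d) * (Gamma (b + c) * Gamma (b + d) * Gamma (c + d)) /
    Gamma (a + b + c + d)

lemma wilsonGamma_ne_zero (ha : 0 < a.re) (hb : 0 < b.re) (hc : 0 < c.re) (hd : 0 < d.re) :
    wilsonGamma a b c d ≠ 0 := by
  have hGamma {w : ℂ} (hw : 0 < w.re) : Gamma w ≠ 0 := Gamma_ne_zero_of_re_pos hw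
  refine div_ne_zero (mul_ne_zero (mul_ne_zero (mul_ne_zero ?_ ?_) ?_)
    (mul_ne_zero (mul_ne_zero ?_ ?_) ?_)) ?_ <;>
  exact hGamma (by simp only [add_re]; positivity)

lemma wilsonGamma_rotate (a b c d : ℂ) : wilsonGamma b c d a = wilsonGamma a b c d := by
  unfold wilsonGamma
  ring_nf

lemma wilsonGamma_recurrence (ha : 0 < a.re) (hb : 0 < b.re) (hc : 0 < c.re) (hd : 0 < d.re) :
    (a + b + c + d) * wilsonGamma (a + 1) b c d =
      (a + b) * (a + c) * (a + d) * wilsonGamma a b c d := by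
  have hGamma {x : ℂ} (hx : 0 < x.re) : Gamma (a + 1 + x) = (a + x) * Gamma (a + x) := by
    rw [add_right_comm, Gamma_add_one _ (ne_zero_of_re_pos (add_pos ha hx))]
  have hsum : 0 < (a + b + c + d).re := by simp only [add_re]; positivity
  have hGamma_sum : Gamma (a + 1 + b + c + d) = (a + b + c + d) * Gamma (a + b + c + d) := by
    rw [← Gamma_add_one _ (ne_zero_of_re_pos hsum)]
    ring_nf
  rw [wilsonGamma, wilsonGamma, hGamma hb, hGamma hc, hGamma hd, hGamma_sum]
  field_simp [Gamma_ne_zero_of_re_pos hsum, ne_zero_of_re_pos hsum]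

lemma wilsonGamma_add_natCast_add_one_div {n : ℕ} (hn : n ≠ 0) (a b c d : ℂ) :
    wilsonGamma (a + (n + 1)) b c d / (n ^ a * n.factorial) ^ 2 =
      gammaShiftRatio (a + b) n * gammaShiftRatio (a + c) n * gammaShiftRatio (a + d) n *
        (Gamma (b + c) * Gamma (b + d) * Gamma (c + d)) / gammaShiftRatio (a + b + c + d) n := by
  have hn' : (n : ℂ) ≠ 0 := mod_cast hn
  have hpow : (n : ℂ) ^ (a + b) * n ^ (a + c) * n ^ (a + d) =
      n ^ (a + b + c + d) * (n ^ a) ^ 2 := by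
    simp only [cpow_add _ _ hn']
    ring
  have hne : (n : ℂ) ^ (a + b + c + d) * n.factorial * (n ^ a * n.factorial) ^ 2 ≠ 0 :=
    mul_ne_zero (natCast_cpow_mul_factorial_ne_zero hn _)
      (pow_ne_zero 2 (natCast_cpow_mul_factorial_ne_zero hn a))
  have hGamma (x : ℂ) : Gamma (a + (n + 1) + x) =
      gammaShiftRatio (a + x) n * (n ^ (a + x) * n.factorial) := by
    rw [add_right_comm, Gamma_add_natCast_add_one hn]
  rw [wilsonGamma, show a + (n + 1) + b + c + d = a + (n + 1) + (b + c + d) by ring,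
    hGamma, hGamma, hGamma, hGamma, show a + (b + c + d) = a + b + c + d by ring, div_div,
    mul_assoc (gammaShiftRatio (a + b + c + d) n), ← mul_div_mul_right _ (gammaShiftRatio _ n) hne]
  congr 1
  linear_combination (gammaShiftRatio (a + b) n * gammaShiftRatio (a + c) n *
    gammaShiftRatio (a + d) n * (Gamma (b + c) * Gamma (b + d) * Gamma (c + d)) *
    (n.factorial : ℂ) ^ 3) * hpow

lemma tendsto_wilsonGamma_div (ha : 0 < a.re) (hb : 0 < b.re) (hc : 0 < c.re) (hd : 0 < d.re) :
    Tendsto (fun n : ℕ ↦ wilsonGamma (a + (n + 1)) b c d / (n ^ a * n.factorial) ^ 2) atTop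
      (𝓝 (Gamma (b + c) * Gamma (b + d) * Gamma (c + d))) := by
  have hab := tendsto_gammaShiftRatio (s := a + b) (add_pos ha hb)
  have hac := tendsto_gammaShiftRatio (s := a + c) (add_pos ha hc)
  have had := tendsto_gammaShiftRatio (s := a + d) (add_pos ha hd)
  have habcd := tendsto_gammaShiftRatio (s := a + b + c + d)
    (add_pos (add_pos (add_pos ha hb) hc) hd)
  have hlim := (((hab.mul hac).mul had).mul_const (Gamma (b + c) * Gamma (b + d) *
    Gamma (c + d))).div habcd one_ne_zero
  simp only [one_mul, div_one] at hlim
  refine hlim.congr' ?_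
  filter_upwards [eventually_ne_atTop 0] with n hn
  exact (wilsonGamma_add_natCast_add_one_div hn a b c d).symm

lemma tendsto_wilsonIntegral_div (ha : 0 < a.re) (hS : ∀ b ∈ S, 0 < b.re)
    (hcard : 3 ≤ Multiset.card S) :
    Tendsto (fun n : ℕ ↦ wilsonIntegral ((a + (n + 1)) ::ₘ S) / (n ^ a * n.factorial) ^ 2) atTop
      (𝓝 (wilsonIntegral S)) := by
  refine (tendsto_integral_gammaPair_div_mul ha (integrable_wilsonWeight hS hcard)).congr fun n ↦ ?_
  rw [wilsonIntegral, ← integral_div]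
  refine integral_congr_ae (ae_of_all _ fun y ↦ ?_)
  simp only [wilsonWeight, gammaProd_cons]
  ring

lemma wilsonIntegral_div_wilsonGamma_add_natCast (ha : 0 < a.re) (hb : 0 < b.re) (hc : 0 < c.re)
    (hd : 0 < d.re) (n : ℕ) :
    wilsonIntegral {a + n, b, c, d} / wilsonGamma (a + n) b c d =
      wilsonIntegral {a, b, c, d} / wilsonGamma a b c d := by
  induction n with
  | zero => simp
  | succ n ih =>
    have han : 0 < (a + n).re := by
      rw [add_re, natCast_re]
      positivity
    have han' : 0 < (a + n + 1).re := add_pos han one_pos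
    have hsum : a + n + b + c + d ≠ 0 :=
      ne_zero_of_re_pos (add_pos (add_pos (add_pos han hb) hc) hd)
    rw [← ih, Nat.cast_succ, ← add_assoc, div_eq_div_iff (wilsonGamma_ne_zero han' hb hc hd)
      (wilsonGamma_ne_zero han hb hc hd)]
    refine mul_left_cancel₀ hsum ?_
    linear_combination wilsonGamma (a + n) b c d * wilsonIntegral_recurrence han hb hc hd -
      wilsonIntegral {a + n, b, c, d} * wilsonGamma_recurrence han hb hc hd

theorem wilsonIntegral_div_wilsonGamma_eq (ha : 0 < a.re) (hb : 0 < b.re) (hc : 0 < c.re)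
    (hd : 0 < d.re) :
    wilsonIntegral {a, b, c, d} / wilsonGamma a b c d =
      wilsonIntegral {b, c, d} / (Gamma (b + c) * Gamma (b + d) * Gamma (c + d)) := by
  have hne : Gamma (b + c) * Gamma (b + d) * Gamma (c + d) ≠ 0 :=
    mul_ne_zero (mul_ne_zero (Gamma_ne_zero_of_re_pos (add_pos hb hc))
      (Gamma_ne_zero_of_re_pos (add_pos hb hd))) (Gamma_ne_zero_of_re_pos (add_pos hc hd))
  have hlim := (tendsto_wilsonIntegral_div (S := {b, c, d}) ha (by simp [hb, hc, hd])
    (by simp)).div (tendsto_wilsonGamma_div ha hb hc hd) hne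
  refine tendsto_nhds_unique (tendsto_const_nhds.congr' ?_) hlim
  filter_upwards [eventually_ne_atTop 0] with n hn
  have hperiod := wilsonIntegral_div_wilsonGamma_add_natCast ha hb hc hd (n + 1)
  push_cast at hperiod
  rw [← hperiod]
  exact (div_div_div_cancel_right₀
    (pow_ne_zero 2 (natCast_cpow_mul_factorial_ne_zero hn a)) _ _).symm

lemma wilsonIntegral_div_wilsonGamma_replace {a' : ℂ} (ha : 0 < a.re) (ha' : 0 < a'.re)
    (hb : 0 < b.re) (hc : 0 < c.re) (hd : 0 < d.re) :
    wilsonIntegral {b, c, d, a} / wilsonGamma b c d a =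
      wilsonIntegral {a', b, c, d} / wilsonGamma a' b c d := by
  have hrotate : ({b, c, d, a} : Multiset ℂ) = {a, b, c, d} := by
    simp only [Multiset.insert_eq_cons, ← Multiset.singleton_add]
    abel
  rw [hrotate, wilsonGamma_rotate, wilsonIntegral_div_wilsonGamma_eq ha hb hc hd,
    wilsonIntegral_div_wilsonGamma_eq ha' hb hc hd]

lemma wilsonWeight_halves (y : ℝ) :
    wilsonWeight {1 / 2, 1 / 2, 1 / 2, 1 / 2} (y * I) =
      ((-2 * π ^ 4 * y * Real.sinh (π * y) / Real.cosh (π * y) ^ 3 : ℝ) : ℂ) := by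
  have hcosh : Complex.cosh (π * y) ≠ 0 := mod_cast (Real.cosh_pos (π * y)).ne'
  simp only [wilsonWeight, Multiset.insert_eq_cons, gammaProd_cons, gammaProd_singleton,
    gammaPair_one_half, ← mul_assoc, Complex.cos_mul_I]
  rw [mul_assoc 2, mul_assoc 2, Complex.sin_two_mul, Complex.sin_mul_I, Complex.cos_mul_I]
  push_cast
  generalize Complex.cosh (π * y) = C at *
  generalize Complex.sinh (π * y) = S
  field_simp
  linear_combination y * S * I_sq

/-- An antiderivative of Wilson's weight at `a = b = c = d = 1/2`, found by parts. -/
noncomputable def wilsonPrimitive (y : ℝ) : ℝ :=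
  π ^ 3 * (y / Real.cosh (π * y) ^ 2) - π ^ 2 * Real.tanh (π * y)

lemma hasDerivAt_wilsonPrimitive (y : ℝ) :
    HasDerivAt wilsonPrimitive
      (-2 * π ^ 4 * y * Real.sinh (π * y) / Real.cosh (π * y) ^ 3) y := by
  have hne : Real.cosh (π * y) ≠ 0 := (Real.cosh_pos _).ne'
  have hlin : HasDerivAt (π * ·) π y := by simpa using (hasDerivAt_id y).const_mul π
  have htanh := (hlin.sinh.div hlin.cosh hne).const_mul (π ^ 2)
  have hquot := ((hasDerivAt_id y).div (hlin.cosh.pow 2) (pow_ne_zero 2 hne)).const_mul (π ^ 3)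
  have hsub := hquot.sub htanh
  simp only [Pi.div_def, ← Real.tanh_eq_sinh_div_cosh] at hsub
  refine hsub.congr_deriv ?_
  have hsq := Real.cosh_sq (π * y)
  simp only [id, Pi.pow_apply, Nat.cast_ofNat, Nat.reduceSub, pow_one]
  generalize Real.cosh (π * y) = C at *
  generalize Real.sinh (π * y) = S at *
  field_simp
  linear_combination -C * hsq

lemma tendsto_tanh_atTop : Tendsto Real.tanh atTop (𝓝 1) := by
  have hlim : Tendsto (fun x : ℝ ↦ 1 - 2 / (Real.exp (2 * x) + 1)) atTop (𝓝 (1 - 0)) :=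
    tendsto_const_nhds.sub (tendsto_const_nhds.div_atTop (tendsto_atTop_add_const_right _ _
      (Real.tendsto_exp_atTop.comp (tendsto_id.const_mul_atTop two_pos))))
  rw [sub_zero] at hlim
  refine hlim.congr fun x ↦ ?_
  rw [Real.tanh_eq, Real.exp_neg, two_mul, Real.exp_add]
  field_simp
  ring

lemma tendsto_wilsonPrimitive_atTop : Tendsto wilsonPrimitive atTop (𝓝 (-π ^ 2)) := by
  have hquot : Tendsto (fun y ↦ y / Real.cosh (π * y) ^ 2) atTop (𝓝 0) := by
    refine squeeze_zero_norm' ?_ tendsto_inv_atTop_zero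
    filter_upwards [eventually_gt_atTop 0] with y hy
    have hcosh : y ≤ Real.cosh (π * y) :=
      calc y ≤ π * y := le_mul_of_one_le_left hy.le (by linarith [Real.pi_gt_three])
        _ ≤ Real.sinh (π * y) := Real.self_le_sinh_iff.2 (by positivity)
        _ ≤ Real.cosh (π * y) := (Real.sinh_lt_cosh _).le
    rw [Real.norm_of_nonneg (by positivity), div_le_iff₀ (by positivity)]
    calc y = y⁻¹ * y ^ 2 := by field_simp
      _ ≤ y⁻¹ * Real.cosh (π * y) ^ 2 := by gcongr
  have htanh : Tendsto (fun y ↦ Real.tanh (π * y)) atTop (𝓝 1) :=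
    tendsto_tanh_atTop.comp (tendsto_id.const_mul_atTop Real.pi_pos)
  have hlim := (hquot.const_mul (π ^ 3)).sub (htanh.const_mul (π ^ 2))
  rwa [mul_zero, mul_one, zero_sub] at hlim

lemma wilsonPrimitive_neg (y : ℝ) : wilsonPrimitive (-y) = -wilsonPrimitive y := by
  simp only [wilsonPrimitive, mul_neg, Real.cosh_neg, Real.tanh_neg]
  ring

lemma wilsonIntegral_halves : wilsonIntegral {1 / 2, 1 / 2, 1 / 2, 1 / 2} = -2 * π ^ 2 := by
  have hbot : Tendsto wilsonPrimitive atBot (𝓝 (π ^ 2)) := by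
    simpa [Function.comp_def, wilsonPrimitive_neg] using
      (tendsto_wilsonPrimitive_atTop.comp tendsto_neg_atBot_atTop).neg
  have hint := integrable_wilsonWeight (S := {1 / 2, 1 / 2, 1 / 2, 1 / 2}) (by simp) (by simp)
  simp only [wilsonWeight_halves] at hint
  rw [wilsonIntegral]
  simp only [wilsonWeight_halves]
  rw [integral_complex_ofReal, integral_of_hasDerivAt_of_tendsto hasDerivAt_wilsonPrimitive
    hint.re hbot tendsto_wilsonPrimitive_atTop]
  push_cast
  ring

lemma wilsonGamma_halves : wilsonGamma (1 / 2) (1 / 2) (1 / 2) (1 / 2) = 1 := by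
  norm_num [wilsonGamma, Gamma_ofNat_eq_factorial]

theorem wilsonIntegral_eq (ha : 0 < a.re) (hb : 0 < b.re) (hc : 0 < c.re) (hd : 0 < d.re) :
    wilsonIntegral {a, b, c, d} = -2 * π ^ 2 * wilsonGamma a b c d := by
  have hhalf : 0 < (1 / 2 : ℂ).re := by norm_num
  rw [← div_eq_iff (wilsonGamma_ne_zero ha hb hc hd),
    wilsonIntegral_div_wilsonGamma_replace hd hhalf ha hb hc,
    wilsonIntegral_div_wilsonGamma_replace hc hhalf hhalf ha hb,
    wilsonIntegral_div_wilsonGamma_replace hb hhalf hhalf hhalf ha,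
    wilsonIntegral_div_wilsonGamma_replace ha hhalf hhalf hhalf hhalf,
    wilsonIntegral_halves, wilsonGamma_halves, div_one]

end WilsonIntegral

lemma mul_sinh_mul_prod_complexBeta (T : ℂ) (t : ℝ) :
    (t : ℂ) * Complex.sinh (π * t) *
      ∏ ε₁ ∈ ({1, -1} : Finset ℤ), ∏ ε₂ ∈ ({1, -1} : Finset ℤ),
        complexBeta (1 / 4 + (ε₁ : ℂ) * I * (t : ℂ) / 2 + (ε₂ : ℂ) * I * T)
          (1 / 4 - (ε₁ : ℂ) * I * (t : ℂ) / 2) =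
      -2 / (Gamma (1 / 2 + T * I) * Gamma (1 / 2 - T * I)) ^ 2 *
        wilsonWeight {1 / 4 + T * I, 1 / 4 - T * I, 1 / 4, 1 / 4} ((t / 2 : ℝ) * I) := by
  have hsin : sin (2 * π * ((t / 2 : ℝ) * I)) = Complex.sinh (π * t) * I := by
    rw [← Complex.sin_mul_I]
    push_cast
    ring_nf
  simp only [Finset.prod_pair (show (1 : ℤ) ≠ -1 by decide), complexBeta, wilsonWeight, hsin,
    Multiset.insert_eq_cons, gammaProd_cons, gammaProd_singleton, gammaPair]
  push_cast
  ring_nf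
  simp only [I_sq]
  ring

lemma wilsonGamma_quarters (T : ℂ) :
    wilsonGamma (1 / 4 + T * I) (1 / 4 - T * I) (1 / 4) (1 / 4) =
      π * (Gamma (1 / 2 + T * I) * Gamma (1 / 2 - T * I)) ^ 2 := by
  have hGamma_half : Gamma (1 / 2) ^ 2 = π := by
    rw [Gamma_one_half_eq, ← cpow_nat_mul]
    norm_num
  rw [wilsonGamma, show (1 / 4 + T * I + (1 / 4 - T * I) + 1 / 4 + 1 / 4 : ℂ) = 1 by ring,
    show (1 / 4 + T * I + (1 / 4 - T * I) : ℂ) = 1 / 2 by ring,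
    show (1 / 4 + T * I + 1 / 4 : ℂ) = 1 / 2 + T * I by ring,
    show (1 / 4 - T * I + 1 / 4 : ℂ) = 1 / 2 - T * I by ring,
    show (1 / 4 + 1 / 4 : ℂ) = 1 / 2 by norm_num, Gamma_one, ← hGamma_half]
  ring

theorem deBranges_Wilson_beta_integral_general {T : ℂ} (hT : |T.im| < 1 / 4) :
    Integrable (fun t : ℝ ↦ (t : ℂ) * Complex.sinh (π * t) *
      ∏ ε₁ ∈ ({1, -1} : Finset ℤ), ∏ ε₂ ∈ ({1, -1} : Finset ℤ),
        complexBeta (1 / 4 + (ε₁ : ℂ) * I * (t : ℂ) / 2 + (ε₂ : ℂ) * I * T)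
          (1 / 4 - (ε₁ : ℂ) * I * (t : ℂ) / 2)) ∧
    (∫ t : ℝ, (t : ℂ) * Complex.sinh (π * t) *
      ∏ ε₁ ∈ ({1, -1} : Finset ℤ), ∏ ε₂ ∈ ({1, -1} : Finset ℤ),
        complexBeta (1 / 4 + (ε₁ : ℂ) * I * (t : ℂ) / 2 + (ε₂ : ℂ) * I * T)
          (1 / 4 - (ε₁ : ℂ) * I * (t : ℂ) / 2))
      = 8 * (π : ℂ) ^ 3 := by
  have hT_re {w : ℂ} (hw : 1 / 4 ≤ w.re) : |(T * I).re| < w.re := by simpa using hT.trans_le hw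
  have hquarter : 0 < (1 / 4 : ℂ).re := by norm_num
  have hadd : 0 < (1 / 4 + T * I).re := re_add_pos_of_abs_re_lt (hT_re (by norm_num))
  have hsub : 0 < (1 / 4 - T * I).re := re_sub_pos_of_abs_re_lt (hT_re (by norm_num))
  have hGamma_add : Gamma (1 / 2 + T * I) ≠ 0 :=
    Gamma_ne_zero_of_re_pos (re_add_pos_of_abs_re_lt (hT_re (by norm_num)))
  have hGamma_sub : Gamma (1 / 2 - T * I) ≠ 0 :=
    Gamma_ne_zero_of_re_pos (re_sub_pos_of_abs_re_lt (hT_re (by norm_num)))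
  have hint : Integrable fun y : ℝ ↦
      wilsonWeight {1 / 4 + T * I, 1 / 4 - T * I, 1 / 4, 1 / 4} (y * I) :=
    integrable_wilsonWeight (by
      simp only [Multiset.insert_eq_cons, Multiset.forall_mem_cons, Multiset.mem_singleton,
        forall_eq]
      exact ⟨hadd, hsub, hquarter, hquarter⟩) (by simp)
  simp only [mul_sinh_mul_prod_complexBeta]
  refine ⟨(hint.comp_div two_ne_zero).const_mul _, ?_⟩
  rw [integral_const_mul, Measure.integral_comp_div fun y : ℝ ↦ wilsonWeight _ (y * I),
    ← wilsonIntegral, wilsonIntegral_eq hadd hsub hquarter hquarter, wilsonGamma_quarters,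
    abs_two, real_smul]
  push_cast
  generalize Gamma (1 / 2 + T * I) = A at *
  generalize Gamma (1 / 2 - T * I) = B at *
  field_simp
  ring

/-- The de Branges–Wilson beta integral: for every real `T`,
`∫_{ℝ} t sinh(πt) ∏_{ε₁,ε₂ = ±1} B(1/4 + ε₁ i t/2 + ε₂ i T, 1/4 − ε₁ i t/2) dt = 8π³`,
and the integrand is absolutely integrable. -/
theorem deBranges_Wilson_beta_integral (T : ℝ) :
    Integrable (fun t : ℝ => (t : ℂ) * Complex.sinh (Real.pi * t) *
      ∏ ε₁ ∈ ({1, -1} : Finset ℤ), ∏ ε₂ ∈ ({1, -1} : Finset ℤ),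
        complexBeta (1/4 + (ε₁ : ℂ) * Complex.I * (t : ℂ) / 2 + (ε₂ : ℂ) * Complex.I * (T : ℂ))
          (1/4 - (ε₁ : ℂ) * Complex.I * (t : ℂ) / 2)) ∧
    (∫ t : ℝ, (t : ℂ) * Complex.sinh (Real.pi * t) *
      ∏ ε₁ ∈ ({1, -1} : Finset ℤ), ∏ ε₂ ∈ ({1, -1} : Finset ℤ),
        complexBeta (1/4 + (ε₁ : ℂ) * Complex.I * (t : ℂ) / 2 + (ε₂ : ℂ) * Complex.I * (T : ℂ))
          (1/4 - (ε₁ : ℂ) * Complex.I * (t : ℂ) / 2))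
      = 8 * (Real.pi : ℂ) ^ 3 :=
  deBranges_Wilson_beta_integral_general (by simp)
end

section
/- Let N ≥ 1 and let χ₁, χ₂, χ₃, χ₄ be Dirichlet characters modulo N. Let s₁, s₂, s₃, s₄ be complex numbers with Re(sⱼ) > 1/2 for j = 1,2,3,4 (so in particular Re(sᵢ + sⱼ) > 1 for i ∈ {1,2}, j ∈ {3,4}, and Re(s₁+s₂+s₃+s₄) > 2). Then the absolutely convergent quadruple sum over positive integers n₁, n₂, n₃, n₄ with n₁n₂ = n₃n₄ of χ₁(n₁)χ₂(n₂)χ₃(n₃)χ₄(n₄) · n₁^{−s₁} n₂^{−s₂} n₃^{−s₃} n₄^{−s₄} satisfies: (that sum) · L(s₁+s₂+s₃+s₄, χ₁χ₂χ₃χ₄) = L(s₁+s₃, χ₁χ₃) · L(s₁+s₄, χ₁χ₄) · L(s₂+s₃, χ₂χ₃) · L(s₂+s₄, χ₂χ₄). -/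
open Complex

/-- For `Re(s) > 1`, the absolutely convergent Dirichlet series
`L(s, ψ) = ∑_{n ≥ 1} ψ(n) n^{-s}` of a Dirichlet character `ψ` mod `N`. -/
noncomputable def dirichletLSeries {N : ℕ} (ψ : DirichletCharacter ℂ N) (s : ℂ) : ℂ :=
  ∑' n : ℕ+, ψ ((n : ℕ) : ZMod N) / ((n : ℕ) : ℂ) ^ s

/-!
If `n₁ n₂ = n₃ n₄`, dividing `n₁` and `n₃` by their gcd `a` gives unique `b, c, d` with `b, c`
coprime and `(n₁, n₂, n₃, n₄) = (ab, cd, ac, bd)`. A completely multiplicative summand then splits,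
so the diagonal sum is `L(s₁+s₃, χ₁χ₃) L(s₂+s₄, χ₂χ₄)` times the sum of
`(χ₁χ₄)(b) b^{-s₁-s₄} (χ₂χ₃)(c) c^{-s₂-s₃}` over coprime pairs. Since every pair of positive
integers is uniquely `(kb, kc)` with `b, c` coprime, multiplying this coprime sum by
`L(s₁+s₂+s₃+s₄, χ₁χ₂χ₃χ₄) = ∑ₖ (χ₁χ₂χ₃χ₄)(k) k^{-s₁-s₂-s₃-s₄}` removes the coprimality condition
and leaves `L(s₁+s₄, χ₁χ₄) L(s₂+s₃, χ₂χ₃)`.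
-/

/-- Ordered pairs of coprime positive integers, the primitive parts of arbitrary pairs. -/
abbrev CoprimePair : Type := {p : ℕ+ × ℕ+ // p.1.Coprime p.2}

namespace CoprimePair

/-- The pair with primitive part `x.2` and gcd `x.1`. -/
def scale (x : ℕ+ × CoprimePair) : ℕ+ × ℕ+ := (x.1 * x.2.1.1, x.1 * x.2.1.2)

lemma gcd_scale (x : ℕ+ × CoprimePair) : (scale x).1.gcd (scale x).2 = x.1 := by
  obtain ⟨g, ⟨b, c⟩, hbc⟩ := x
  apply PNat.eq
  simp only [scale, PNat.gcd_coe, PNat.mul_coe]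
  rw [Nat.gcd_mul_left, (PNat.coprime_coe.mpr hbc).gcd_eq_one, mul_one]

lemma scale_injective : Function.Injective scale := by
  intro x y hxy
  have hgcd : x.1 = y.1 := by rw [← gcd_scale x, hxy, gcd_scale y]
  obtain ⟨g, p⟩ := x
  obtain ⟨_, q⟩ := y
  obtain rfl : g = _ := hgcd
  obtain ⟨hfst, hsnd⟩ := Prod.mk.inj hxy
  exact Prod.ext rfl (Subtype.ext (Prod.ext (mul_left_cancel hfst) (mul_left_cancel hsnd)))

lemma scale_surjective : Function.Surjective scale := by
  rintro ⟨m, n⟩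
  obtain ⟨b, hb⟩ := PNat.gcd_dvd_left m n
  obtain ⟨c, hc⟩ := PNat.gcd_dvd_right m n
  have hbc : b.Coprime c := by
    rw [← PNat.coprime_coe]
    refine Nat.eq_of_mul_eq_mul_left (m.gcd n).pos ?_
    rw [← Nat.gcd_mul_left, ← PNat.mul_coe, ← PNat.mul_coe, ← hb, ← hc, mul_one, PNat.gcd_coe]
  exact ⟨(m.gcd n, ⟨(b, c), hbc⟩), Prod.ext hb.symm hc.symm⟩

/-- The solution `(ab, cd, ac, bd)` of `n₁ n₂ = n₃ n₄` attached to `((a, d), (b, c))`. -/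
def diagonalPoint (x : (ℕ+ × ℕ+) × CoprimePair) : ℕ+ × ℕ+ × ℕ+ × ℕ+ :=
  (x.1.1 * x.2.1.1, x.2.1.2 * x.1.2, x.1.1 * x.2.1.2, x.2.1.1 * x.1.2)

lemma diagonalPoint_injective : Function.Injective diagonalPoint := by
  rintro ⟨⟨a, d⟩, p⟩ ⟨⟨a', d'⟩, p'⟩ h
  simp only [diagonalPoint, Prod.mk.injEq] at h
  obtain ⟨h₁, h₂, h₃, -⟩ := h
  obtain ⟨rfl, rfl⟩ := Prod.mk.inj (@scale_injective (a, p) (a', p') (Prod.ext h₁ h₃))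
  rw [mul_left_cancel h₂]

lemma range_diagonalPoint :
    Set.range diagonalPoint = {q | q.1 * q.2.1 = q.2.2.1 * q.2.2.2} := by
  ext ⟨n₁, n₂, n₃, n₄⟩
  constructor
  · rintro ⟨⟨⟨a, d⟩, ⟨b, c⟩, hbc⟩, h⟩
    obtain ⟨rfl, rfl, rfl, rfl⟩ : a * b = n₁ ∧ c * d = n₂ ∧ a * c = n₃ ∧ b * d = n₄ := by
      simpa only [diagonalPoint, Prod.mk.injEq] using h
    exact mul_mul_mul_comm a b c d
  · intro (hq : n₁ * n₂ = n₃ * n₄)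
    obtain ⟨⟨a, ⟨b, c⟩, hbc⟩, h⟩ := scale_surjective (n₁, n₃)
    obtain ⟨rfl, rfl⟩ : a * b = n₁ ∧ a * c = n₃ := Prod.mk.inj h
    have hbc_mul : b * n₂ = c * n₄ := mul_left_cancel (a := a) (by rw [← mul_assoc, hq, mul_assoc])
    have hc_dvd : c ∣ n₂ := by
      rw [PNat.dvd_iff]
      refine (PNat.coprime_coe.mpr hbc).symm.dvd_of_dvd_mul_left (Dvd.intro (n₄ : ℕ) ?_)
      rw [← PNat.mul_coe, ← hbc_mul, PNat.mul_coe]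
    obtain ⟨d, rfl⟩ := hc_dvd
    obtain rfl : b * d = n₄ := mul_left_cancel (a := c) (by rw [← hbc_mul, mul_left_comm])
    exact ⟨((a, d), ⟨(b, c), hbc⟩), rfl⟩

end CoprimePair

section CompletelyMultiplicative

open CoprimePair

variable {R : Type*}

/-- The summand of the diagonal sum: `f₁(n₁) f₂(n₂) f₃(n₃) f₄(n₄)` extended by zero off the
hypersurface `n₁ n₂ = n₃ n₄`. -/
def diagonalTerm [Mul R] [Zero R] (f₁ f₂ f₃ f₄ : ℕ+ → R) (q : ℕ+ × ℕ+ × ℕ+ × ℕ+) : R :=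
  if q.1 * q.2.1 = q.2.2.1 * q.2.2.2 then f₁ q.1 * f₂ q.2.1 * f₃ q.2.2.1 * f₄ q.2.2.2 else 0

lemma diagonalTerm_of_notMem_range [Mul R] [Zero R] (f₁ f₂ f₃ f₄ : ℕ+ → R)
    {q : ℕ+ × ℕ+ × ℕ+ × ℕ+} (hq : q ∉ Set.range diagonalPoint) : diagonalTerm f₁ f₂ f₃ f₄ q = 0 :=
  if_neg (by rwa [range_diagonalPoint] at hq)

lemma diagonalTerm_diagonalPoint [CommSemiring R] (f₁ f₂ f₃ f₄ : ℕ+ →ₙ* R)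
    (x : (ℕ+ × ℕ+) × CoprimePair) :
    diagonalTerm f₁ f₂ f₃ f₄ (diagonalPoint x) =
      (f₁ * f₃) x.1.1 * (f₂ * f₄) x.1.2 * ((f₁ * f₄) x.2.1.1 * (f₂ * f₃) x.2.1.2) := by
  have hx : diagonalPoint x ∈ {q | q.1 * q.2.1 = q.2.2.1 * q.2.2.2} :=
    range_diagonalPoint ▸ Set.mem_range_self x
  rw [Set.mem_ofPred_eq] at hx
  rw [diagonalTerm, if_pos hx]
  simp only [diagonalPoint, map_mul, MulHom.mul_apply]
  ring

lemma summable_norm_coprimePair [NormedRing R] {u v : ℕ+ → R} (hu : Summable fun n => ‖u n‖)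
    (hv : Summable fun n => ‖v n‖) :
    Summable fun p : CoprimePair => ‖u p.1.1 * v p.1.2‖ :=
  (hu.mul_norm hv).comp_injective Subtype.val_injective

lemma tsum_mul_tsum_coprimePair [NormedCommRing R] [CompleteSpace R]
    {u v : ℕ+ →ₙ* R} (hu : Summable fun n => ‖u n‖) (hv : Summable fun n => ‖v n‖) :
    (∑' k, (u * v) k) * (∑' p : CoprimePair, u p.1.1 * v p.1.2) =
      (∑' n, u n) * ∑' n, v n := by
  have hdiag : Summable fun k => ‖(u * v) k‖ :=
    (hu.mul_norm hv).comp_injective (i := fun k => (k, k)) fun _ _ h => congrArg Prod.fst h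
  have hsplit (x : ℕ+ × CoprimePair) : (u * v) x.1 * (u x.2.1.1 * v x.2.1.2) =
      u (scale x).1 * v (scale x).2 := by
    simp only [scale, map_mul, MulHom.mul_apply]
    exact mul_mul_mul_comm _ _ _ _
  calc (∑' k, (u * v) k) * (∑' p : CoprimePair, u p.1.1 * v p.1.2)
      = ∑' x : ℕ+ × CoprimePair, (u * v) x.1 * (u x.2.1.1 * v x.2.1.2) :=
        tsum_mul_tsum_of_summable_norm hdiag (summable_norm_coprimePair hu hv)
    _ = ∑' x, u (scale x).1 * v (scale x).2 := tsum_congr hsplit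
    _ = ∑' y : ℕ+ × ℕ+, u y.1 * v y.2 :=
        (Equiv.ofBijective scale ⟨scale_injective, scale_surjective⟩).tsum_eq
          fun y => u y.1 * v y.2
    _ = (∑' n, u n) * ∑' n, v n := (tsum_mul_tsum_of_summable_norm hu hv).symm

variable [NormedCommRing R] {f₁ f₂ f₃ f₄ : ℕ+ →ₙ* R}

lemma summable_norm_diagonalTerm
    (h₁₃ : Summable fun n => ‖(f₁ * f₃) n‖) (h₁₄ : Summable fun n => ‖(f₁ * f₄) n‖)
    (h₂₃ : Summable fun n => ‖(f₂ * f₃) n‖) (h₂₄ : Summable fun n => ‖(f₂ * f₄) n‖) :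
    Summable fun q => ‖diagonalTerm f₁ f₂ f₃ f₄ q‖ := by
  rw [← diagonalPoint_injective.summable_iff fun q hq => by
    rw [diagonalTerm_of_notMem_range _ _ _ _ hq, norm_zero]]
  simpa only [Function.comp_def, diagonalTerm_diagonalPoint] using
    (h₁₃.mul_norm h₂₄).mul_norm (summable_norm_coprimePair h₁₄ h₂₃)

lemma tsum_diagonalTerm [CompleteSpace R]
    (h₁₃ : Summable fun n => ‖(f₁ * f₃) n‖) (h₁₄ : Summable fun n => ‖(f₁ * f₄) n‖)
    (h₂₃ : Summable fun n => ‖(f₂ * f₃) n‖) (h₂₄ : Summable fun n => ‖(f₂ * f₄) n‖) :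
    ∑' q, diagonalTerm f₁ f₂ f₃ f₄ q =
      (∑' n, (f₁ * f₃) n) * (∑' n, (f₂ * f₄) n) *
        ∑' p : CoprimePair, (f₁ * f₄) p.1.1 * (f₂ * f₃) p.1.2 := by
  have hsupport : Function.support (diagonalTerm f₁ f₂ f₃ f₄) ⊆ Set.range diagonalPoint :=
    Function.support_subset_iff'.mpr fun _ => diagonalTerm_of_notMem_range _ _ _ _
  rw [← diagonalPoint_injective.tsum_eq hsupport, tsum_mul_tsum_of_summable_norm h₁₃ h₂₄,
    tsum_mul_tsum_of_summable_norm (h₁₃.mul_norm h₂₄) (summable_norm_coprimePair h₁₄ h₂₃)]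
  exact tsum_congr (diagonalTerm_diagonalPoint f₁ f₂ f₃ f₄)

theorem tsum_diagonalTerm_mul_tsum [CompleteSpace R]
    (h₁₃ : Summable fun n => ‖(f₁ * f₃) n‖) (h₁₄ : Summable fun n => ‖(f₁ * f₄) n‖)
    (h₂₃ : Summable fun n => ‖(f₂ * f₃) n‖) (h₂₄ : Summable fun n => ‖(f₂ * f₄) n‖) :
    (∑' q, diagonalTerm f₁ f₂ f₃ f₄ q) * ∑' n, (f₁ * f₂ * f₃ * f₄) n =
      (∑' n, (f₁ * f₃) n) * (∑' n, (f₁ * f₄) n) * (∑' n, (f₂ * f₃) n) *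
        ∑' n, (f₂ * f₄) n := by
  have hcoprime := tsum_mul_tsum_coprimePair h₁₄ h₂₃
  have hprod : f₁ * f₄ * (f₂ * f₃) = f₁ * f₂ * f₃ * f₄ := by
    ext n
    simp only [MulHom.mul_apply]
    ring
  rw [hprod] at hcoprime
  rw [tsum_diagonalTerm h₁₃ h₁₄ h₂₃ h₂₄]
  linear_combination (∑' n, (f₁ * f₃) n) * (∑' n, (f₂ * f₄) n) * hcoprime

end CompletelyMultiplicative

section DirichletCharacter

variable {N : ℕ}

/-- The completely multiplicative summand `n ↦ χ(n) n^{-s}` of `L(s, χ)`. -/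
noncomputable def dirichletTerm (χ : DirichletCharacter ℂ N) (s : ℂ) : ℕ+ →ₙ* ℂ where
  toFun n := χ ((n : ℕ) : ZMod N) / ((n : ℕ) : ℂ) ^ s
  map_mul' a b := by
    rw [PNat.mul_coe, Nat.cast_mul, Nat.cast_mul, map_mul, natCast_mul_natCast_cpow,
      mul_div_mul_comm]

lemma dirichletTerm_apply (χ : DirichletCharacter ℂ N) (s : ℂ) (n : ℕ+) :
    dirichletTerm χ s n = χ ((n : ℕ) : ZMod N) / ((n : ℕ) : ℂ) ^ s :=
  rfl

lemma tsum_dirichletTerm (χ : DirichletCharacter ℂ N) (s : ℂ) :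
    ∑' n, dirichletTerm χ s n = dirichletLSeries χ s :=
  rfl

lemma dirichletTerm_mul_dirichletTerm (χ ψ : DirichletCharacter ℂ N) (s t : ℂ) :
    dirichletTerm χ s * dirichletTerm ψ t = dirichletTerm (χ * ψ) (s + t) := by
  ext n
  have hn : ((n : ℕ) : ℂ) ≠ 0 := Nat.cast_ne_zero.mpr n.ne_zero
  simp only [MulHom.mul_apply, dirichletTerm_apply, MulChar.mul_apply, cpow_add _ _ hn,
    div_mul_div_comm]

lemma summable_norm_dirichletTerm (χ : DirichletCharacter ℂ N) {s : ℂ} (hs : 1 < s.re) :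
    Summable fun n => ‖dirichletTerm χ s n‖ := by
  refine ((χ.LSeriesSummable_of_one_lt_re hs).norm.comp_injective PNat.coe_injective).congr ?_
  intro n
  rw [Function.comp_apply, LSeries.term_of_ne_zero n.ne_zero, dirichletTerm_apply]

end DirichletCharacter

theorem ramanujan_identity_twisted_general {N : ℕ}
    (χ₁ χ₂ χ₃ χ₄ : DirichletCharacter ℂ N) (s₁ s₂ s₃ s₄ : ℂ)
    (h₁₃ : 1 < (s₁ + s₃).re) (h₁₄ : 1 < (s₁ + s₄).re)
    (h₂₃ : 1 < (s₂ + s₃).re) (h₂₄ : 1 < (s₂ + s₄).re) :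
    Summable (fun q : ℕ+ × ℕ+ × ℕ+ × ℕ+ =>
      ‖(if (q.1 * q.2.1 : ℕ+) = q.2.2.1 * q.2.2.2 then
          χ₁ ((q.1 : ℕ) : ZMod N) * χ₂ ((q.2.1 : ℕ) : ZMod N) *
            χ₃ ((q.2.2.1 : ℕ) : ZMod N) * χ₄ ((q.2.2.2 : ℕ) : ZMod N) /
            (((q.1 : ℕ) : ℂ) ^ s₁ * ((q.2.1 : ℕ) : ℂ) ^ s₂ *
              ((q.2.2.1 : ℕ) : ℂ) ^ s₃ * ((q.2.2.2 : ℕ) : ℂ) ^ s₄)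
        else 0)‖) ∧
    (∑' q : ℕ+ × ℕ+ × ℕ+ × ℕ+,
      if (q.1 * q.2.1 : ℕ+) = q.2.2.1 * q.2.2.2 then
          χ₁ ((q.1 : ℕ) : ZMod N) * χ₂ ((q.2.1 : ℕ) : ZMod N) *
            χ₃ ((q.2.2.1 : ℕ) : ZMod N) * χ₄ ((q.2.2.2 : ℕ) : ZMod N) /
            (((q.1 : ℕ) : ℂ) ^ s₁ * ((q.2.1 : ℕ) : ℂ) ^ s₂ *
              ((q.2.2.1 : ℕ) : ℂ) ^ s₃ * ((q.2.2.2 : ℕ) : ℂ) ^ s₄)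
        else 0) * dirichletLSeries (χ₁ * χ₂ * χ₃ * χ₄) (s₁ + s₂ + s₃ + s₄)
      = dirichletLSeries (χ₁ * χ₃) (s₁ + s₃) * dirichletLSeries (χ₁ * χ₄) (s₁ + s₄) *
        dirichletLSeries (χ₂ * χ₃) (s₂ + s₃) * dirichletLSeries (χ₂ * χ₄) (s₂ + s₄) := by
  have hsummable (χ ψ : DirichletCharacter ℂ N) {s t : ℂ} (hst : 1 < (s + t).re) :
      Summable fun n => ‖(dirichletTerm χ s * dirichletTerm ψ t) n‖ := by
    rw [dirichletTerm_mul_dirichletTerm]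
    exact summable_norm_dirichletTerm _ hst
  have hsum := summable_norm_diagonalTerm
    (hsummable χ₁ χ₃ h₁₃) (hsummable χ₁ χ₄ h₁₄) (hsummable χ₂ χ₃ h₂₃) (hsummable χ₂ χ₄ h₂₄)
  have hidentity := tsum_diagonalTerm_mul_tsum
    (hsummable χ₁ χ₃ h₁₃) (hsummable χ₁ χ₄ h₁₄) (hsummable χ₂ χ₃ h₂₃) (hsummable χ₂ χ₄ h₂₄)
  simp only [dirichletTerm_mul_dirichletTerm, tsum_dirichletTerm] at hidentity
  simp only [diagonalTerm, dirichletTerm_apply, div_mul_div_comm] at hsum hidentity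
  exact ⟨hsum, hidentity⟩

/-- Ramanujan's identity for twisted Dirichlet series: the diagonal quadruple sum
`∑_{n₁n₂ = n₃n₄} χ₁(n₁)χ₂(n₂)χ₃(n₃)χ₄(n₄) n₁^{-s₁} n₂^{-s₂} n₃^{-s₃} n₄^{-s₄}`
is absolutely convergent and, multiplied by `L(s₁+s₂+s₃+s₄, χ₁χ₂χ₃χ₄)`, equals
`L(s₁+s₃, χ₁χ₃) L(s₁+s₄, χ₁χ₄) L(s₂+s₃, χ₂χ₃) L(s₂+s₄, χ₂χ₄)`. -/
theorem ramanujan_identity_twisted {N : ℕ} (hN : 1 ≤ N)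
    (χ₁ χ₂ χ₃ χ₄ : DirichletCharacter ℂ N) (s₁ s₂ s₃ s₄ : ℂ)
    (h₁ : 1/2 < s₁.re) (h₂ : 1/2 < s₂.re) (h₃ : 1/2 < s₃.re) (h₄ : 1/2 < s₄.re) :
    Summable (fun q : ℕ+ × ℕ+ × ℕ+ × ℕ+ =>
      ‖(if (q.1 * q.2.1 : ℕ+) = q.2.2.1 * q.2.2.2 then
          χ₁ ((q.1 : ℕ) : ZMod N) * χ₂ ((q.2.1 : ℕ) : ZMod N) *
            χ₃ ((q.2.2.1 : ℕ) : ZMod N) * χ₄ ((q.2.2.2 : ℕ) : ZMod N) /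
            (((q.1 : ℕ) : ℂ) ^ s₁ * ((q.2.1 : ℕ) : ℂ) ^ s₂ *
              ((q.2.2.1 : ℕ) : ℂ) ^ s₃ * ((q.2.2.2 : ℕ) : ℂ) ^ s₄)
        else 0)‖) ∧
    (∑' q : ℕ+ × ℕ+ × ℕ+ × ℕ+,
      if (q.1 * q.2.1 : ℕ+) = q.2.2.1 * q.2.2.2 then
          χ₁ ((q.1 : ℕ) : ZMod N) * χ₂ ((q.2.1 : ℕ) : ZMod N) *
            χ₃ ((q.2.2.1 : ℕ) : ZMod N) * χ₄ ((q.2.2.2 : ℕ) : ZMod N) /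
            (((q.1 : ℕ) : ℂ) ^ s₁ * ((q.2.1 : ℕ) : ℂ) ^ s₂ *
              ((q.2.2.1 : ℕ) : ℂ) ^ s₃ * ((q.2.2.2 : ℕ) : ℂ) ^ s₄)
        else 0) * dirichletLSeries (χ₁ * χ₂ * χ₃ * χ₄) (s₁ + s₂ + s₃ + s₄)
      = dirichletLSeries (χ₁ * χ₃) (s₁ + s₃) * dirichletLSeries (χ₁ * χ₄) (s₁ + s₄) *
        dirichletLSeries (χ₂ * χ₃) (s₂ + s₃) * dirichletLSeries (χ₂ * χ₄) (s₂ + s₄) := by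
  refine ramanujan_identity_twisted_general χ₁ χ₂ χ₃ χ₄ s₁ s₂ s₃ s₄ ?_ ?_ ?_ ?_ <;>
    rw [add_re] <;> linarith
end

section
/- Define g(x) = ∫_x^∞ K₀(y)² dy for x > 0. Then for every complex number s with Re(s) > 0, the Mellin transform ∫₀^∞ g(x)·x^{s−1} dx converges absolutely and equals 2^{s−2} · Γ((1+s)/2)⁴ / (s·Γ(1+s)). -/
open MeasureTheory Complex

/-- The modified Bessel function of the second kind of order `0`:
`K₀(y) = ∫₀^∞ exp(−y cosh t) dt` for `y > 0`. -/
noncomputable def besselK0 (y : ℝ) : ℝ :=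
  ∫ t in Set.Ioi (0 : ℝ), Real.exp (-y * Real.cosh t)

/-- The incomplete integral `g(x) = ∫_x^∞ K₀(y)² dy`. -/
noncomputable def gK0 (x : ℝ) : ℝ :=
  ∫ y in Set.Ioi x, (besselK0 y) ^ 2

/-!
A superposition of dilates `x ↦ ∫ k (φ p * x) • h p ∂μ(p)` has Mellin transform
`mellin k s • ∫ φ p ^ (-s) • h p ∂μ(p)`. This is used twice:

* Taking `k = 1_(0,1]` and `φ y = 1 / y` shows that the tail `∫_x^∞ f` has Mellin transform
  `mellin f (s + 1) / s`.
* Taking `k = exp (-·)` and `φ (u, v) = cosh u + cosh v` reduces the Mellin transform of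
  `K₀(y)² = ¼ ∬ exp (-y (cosh u + cosh v))` to the integral of `(cosh u + cosh v) ^ (-w)` over the
  plane. In the coordinates `u = a + b`, `v = a - b` the base becomes `2 cosh a cosh b`, so that
  integral splits into the square of `∫ cosh t ^ (-w)`, which the logistic substitution turns into
  the Beta integral `B(w/2, w/2)`.
-/

section MellinSuperposition

variable {E : Type*} [NormedAddCommGroup E] [NormedSpace ℂ E]

lemma hasMellin_congr {f g : ℝ → E} {s : ℂ} {m : E} (hfg : Set.EqOn f g (Set.Ioi 0)) :
    HasMellin f s m ↔ HasMellin g s m := by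
  have hsmul : Set.EqOn (fun x : ℝ => (x : ℂ) ^ (s - 1) • f x)
      (fun x : ℝ => (x : ℂ) ^ (s - 1) • g x) (Set.Ioi 0) := fun x hx => by
    simp only [hfg hx]
  rw [HasMellin, HasMellin, MellinConvergent, MellinConvergent, mellin, mellin,
    integrableOn_congr_fun hsmul measurableSet_Ioi, setIntegral_congr_fun measurableSet_Ioi hsmul]

lemma integral_norm_cpow_smul_comp_mul_left (f : ℝ → E) (s : ℂ) {a : ℝ} (ha : 0 < a) :
    ∫ x in Set.Ioi (0 : ℝ), ‖(x : ℂ) ^ (s - 1) • f (a * x)‖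
      = ‖(a : ℂ) ^ (-s)‖ * ∫ x in Set.Ioi (0 : ℝ), ‖(x : ℂ) ^ (s - 1) • f x‖ := by
  have hscale : ∀ x ∈ Set.Ioi (0 : ℝ), ‖(x : ℂ) ^ (s - 1) • f (a * x)‖
      = a ^ (1 - s.re) * ‖((a * x : ℝ) : ℂ) ^ (s - 1) • f (a * x)‖ := fun x hx => by
    have hcancel : a ^ (1 - s.re) * a ^ (s.re - 1) = 1 := by
      rw [← Real.rpow_add ha, sub_add_sub_cancel', sub_self, Real.rpow_zero]
    rw [norm_smul, norm_smul, norm_cpow_eq_rpow_re_of_pos hx,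
      norm_cpow_eq_rpow_re_of_pos (mul_pos ha hx), sub_re, one_re,
      Real.mul_rpow ha.le (le_of_lt hx), mul_assoc, ← mul_assoc (a ^ (1 - s.re)), hcancel, one_mul]
  rw [setIntegral_congr_fun measurableSet_Ioi hscale, integral_const_mul,
    integral_comp_mul_left_Ioi (fun x : ℝ => ‖(x : ℂ) ^ (s - 1) • f x‖) 0 ha, mul_zero,
    smul_eq_mul, ← mul_assoc, norm_cpow_eq_rpow_re_of_pos ha, neg_re, ← Real.rpow_neg_one,
    ← Real.rpow_add ha]
  ring_nf

variable {α : Type*} [MeasurableSpace α] {μ : Measure α} [SFinite μ]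
  {k : ℝ → ℂ} {φ : α → ℝ} {h : α → E} {s : ℂ}

lemma integrable_cpow_smul_comp_mul_smul (hkm : Measurable k) (hk : MellinConvergent k s)
    (hφm : AEMeasurable φ μ) (hφ : ∀ᵐ p ∂μ, 0 < φ p)
    (hh : Integrable (fun p => (φ p : ℂ) ^ (-s) • h p) μ) :
    Integrable (fun z : ℝ × α => (z.1 : ℂ) ^ (s - 1) • k (φ z.2 * z.1) • h z.2)
      ((volume.restrict (Set.Ioi 0)).prod μ) := by
  have hhm : AEStronglyMeasurable h μ := by
    have hpow : AEStronglyMeasurable (fun p => (φ p : ℂ) ^ s) μ :=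
      (hφm.complex_ofReal.pow_const s).aestronglyMeasurable
    refine (hpow.smul hh.aestronglyMeasurable).congr ?_
    filter_upwards [hφ] with p hp
    simp only [Pi.smul_apply', smul_smul, ← cpow_add _ _ (ofReal_ne_zero.2 hp.ne'), add_neg_cancel,
      cpow_zero, one_smul]
  have hkφm : AEStronglyMeasurable (fun z : ℝ × α => k (φ z.2 * z.1))
      ((volume.restrict (Set.Ioi 0)).prod μ) :=
    (hkm.comp_aemeasurable (hφm.comp_snd.mul measurable_fst.aemeasurable)).aestronglyMeasurable
  have hpowm : AEStronglyMeasurable (fun z : ℝ × α => (z.1 : ℂ) ^ (s - 1))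
      ((volume.restrict (Set.Ioi 0)).prod μ) :=
    (measurable_fst.complex_ofReal.pow_const _).aestronglyMeasurable
  have hm : AEStronglyMeasurable
      (fun z : ℝ × α => (z.1 : ℂ) ^ (s - 1) • k (φ z.2 * z.1) • h z.2)
      ((volume.restrict (Set.Ioi 0)).prod μ) := hpowm.smul (hkφm.smul hhm.comp_snd)
  refine (integrable_prod_iff' hm).2 ⟨?_, ?_⟩
  · filter_upwards [hφ] with p hp
    simp only [← smul_assoc]
    exact Integrable.smul_const ((MellinConvergent.comp_mul_left hp).2 hk) (h p)
  · refine (hh.norm.const_mul (∫ x in Set.Ioi (0 : ℝ), ‖(x : ℂ) ^ (s - 1) • k x‖)).congr ?_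
    filter_upwards [hφ] with p hp
    simp only [← smul_assoc]
    simp only [norm_smul _ (h p)]
    rw [integral_mul_const, integral_norm_cpow_smul_comp_mul_left k s hp]
    ring

theorem hasMellin_integral_comp_mul_smul [CompleteSpace E] (hkm : Measurable k)
    (hk : MellinConvergent k s) (hφm : AEMeasurable φ μ) (hφ : ∀ᵐ p ∂μ, 0 < φ p)
    (hh : Integrable (fun p => (φ p : ℂ) ^ (-s) • h p) μ) :
    HasMellin (fun x => ∫ p, k (φ p * x) • h p ∂μ) s
      (mellin k s • ∫ p, (φ p : ℂ) ^ (-s) • h p ∂μ) := by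
  have hint := integrable_cpow_smul_comp_mul_smul hkm hk hφm hφ hh
  have hdilate : ∀ᵐ p ∂μ, ∫ x in Set.Ioi (0 : ℝ), (x : ℂ) ^ (s - 1) • k (φ p * x) • h p
      = mellin k s • (φ p : ℂ) ^ (-s) • h p := by
    filter_upwards [hφ] with p hp
    simp only [← smul_assoc]
    rw [integral_smul_const, ← mellin, mellin_comp_mul_left k s hp, smul_eq_mul, smul_eq_mul,
      mul_comm]
  rw [HasMellin, MellinConvergent, mellin]
  simp only [← integral_smul]
  exact ⟨hint.integral_prod_left, (integral_integral_swap hint).trans (integral_congr_ae hdilate)⟩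

theorem hasMellin_integral_Ioi [CompleteSpace E] {f : ℝ → E} (hs : 0 < s.re)
    (hf : MellinConvergent f (s + 1)) :
    HasMellin (fun x => ∫ y in Set.Ioi x, f y) s ((1 / s) • mellin f (s + 1)) := by
  have hpow : Set.EqOn (fun y : ℝ => (y : ℂ) ^ (s + 1 - 1) • f y)
      (fun y : ℝ => ((y⁻¹ : ℝ) : ℂ) ^ (-s) • f y) (Set.Ioi 0) := fun y hy => by
    simp only
    rw [add_sub_cancel_right, ofReal_inv,
      inv_cpow _ _ (arg_ofReal_of_nonneg (le_of_lt hy) ▸ Real.pi_pos.ne), cpow_neg, inv_inv]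
  have hkernel := hasMellin_one_Ioc hs
  have hsuper := hasMellin_integral_comp_mul_smul (measurable_const.indicator measurableSet_Ioc)
    hkernel.1 measurable_inv.aemeasurable (ae_restrict_of_forall_mem measurableSet_Ioi fun y hy =>
      inv_pos.2 hy) ((integrableOn_congr_fun hpow measurableSet_Ioi).1 hf)
  rw [hkernel.2, ← setIntegral_congr_fun measurableSet_Ioi hpow, ← mellin] at hsuper
  refine (hasMellin_congr fun x hx => ?_).1 hsuper
  have hindicator : Set.EqOn
      (fun y => (Set.Ioc (0 : ℝ) 1).indicator (fun _ => (1 : ℂ)) (y⁻¹ * x) • f y)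
      ((Set.Ici x).indicator f) (Set.Ioi 0) := fun y hy => by
    have hmem : y⁻¹ * x ∈ Set.Ioc (0 : ℝ) 1 ↔ y ∈ Set.Ici x := by
      rw [Set.mem_Ioc, Set.mem_Ici, inv_mul_le_one₀ (Set.mem_Ioi.1 hy)]
      exact and_iff_right (mul_pos (inv_pos.2 hy) hx)
    by_cases hy' : y ∈ Set.Ici x <;> simp [Set.indicator, hmem, hy']
  rw [setIntegral_congr_fun measurableSet_Ioi hindicator, setIntegral_indicator measurableSet_Ici,
    Set.inter_eq_right.2 (Set.Ici_subset_Ioi.2 hx), integral_Ici_eq_integral_Ioi]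

end MellinSuperposition

lemma hasMellin_exp_neg {s : ℂ} (hs : 0 < s.re) :
    HasMellin (fun x : ℝ => ((Real.exp (-x) : ℝ) : ℂ)) s (Gamma s) := by
  refine ⟨?_, by rw [Gamma_eq_integral hs, GammaIntegral_eq_mellin]⟩
  simpa only [MellinConvergent, smul_eq_mul, mul_comm] using GammaIntegral_convergent hs

section Logistic

variable {F : Type*} [NormedAddCommGroup F] [NormedSpace ℝ F]

lemma abs_sigmoid_mul_one_sub_sigmoid (t : ℝ) :
    |Real.sigmoid t * (1 - Real.sigmoid t)| = Real.sigmoid t * (1 - Real.sigmoid t) :=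
  abs_of_pos (mul_pos (Real.sigmoid_pos t) (sub_pos.2 (Real.sigmoid_lt_one t)))

lemma integrableOn_Ioo_zero_one_iff_integrable_comp_sigmoid (g : ℝ → F) :
    IntegrableOn g (Set.Ioo 0 1) ↔
      Integrable fun t => (Real.sigmoid t * (1 - Real.sigmoid t)) • g (Real.sigmoid t) := by
  have hchange := integrableOn_image_iff_integrableOn_abs_deriv_smul MeasurableSet.univ
    (fun t _ => (Real.hasDerivAt_sigmoid t).hasDerivWithinAt) Real.sigmoid_injective.injOn g
  simpa only [Set.image_univ, Real.range_sigmoid, integrableOn_univ,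
    abs_sigmoid_mul_one_sub_sigmoid] using hchange

lemma integral_Ioo_zero_one_eq_integral_comp_sigmoid (g : ℝ → F) :
    ∫ x in Set.Ioo 0 1, g x
      = ∫ t, (Real.sigmoid t * (1 - Real.sigmoid t)) • g (Real.sigmoid t) := by
  have hchange := integral_image_eq_integral_abs_deriv_smul MeasurableSet.univ
    (fun t _ => (Real.hasDerivAt_sigmoid t).hasDerivWithinAt) Real.sigmoid_injective.injOn g
  simpa only [Set.image_univ, Real.range_sigmoid, setIntegral_univ,
    abs_sigmoid_mul_one_sub_sigmoid] using hchange

lemma sigmoid_mul_one_sub_smul_cpow_sub_one (a b : ℂ) (t : ℝ) :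
    (Real.sigmoid t * (1 - Real.sigmoid t)) •
        ((Real.sigmoid t : ℂ) ^ (a - 1) * (1 - (Real.sigmoid t : ℂ)) ^ (b - 1))
      = (Real.sigmoid t : ℂ) ^ a * (1 - (Real.sigmoid t : ℂ)) ^ b := by
  have hσ : (Real.sigmoid t : ℂ) ≠ 0 := ofReal_ne_zero.2 (Real.sigmoid_pos t).ne'
  have hσ' : 1 - (Real.sigmoid t : ℂ) ≠ 0 := by
    exact_mod_cast (sub_pos.2 (Real.sigmoid_lt_one t)).ne'
  rw [cpow_sub _ _ hσ, cpow_sub _ _ hσ', cpow_one, cpow_one, real_smul]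
  push_cast
  field_simp

lemma integrable_sigmoid_cpow_mul_one_sub_sigmoid_cpow {a b : ℂ} (ha : 0 < a.re)
    (hb : 0 < b.re) :
    Integrable fun t : ℝ => (Real.sigmoid t : ℂ) ^ a * (1 - (Real.sigmoid t : ℂ)) ^ b := by
  have hbeta := (intervalIntegrable_iff_integrableOn_Ioo_of_le zero_le_one).1
    (betaIntegral_convergent ha hb)
  simpa only [sigmoid_mul_one_sub_smul_cpow_sub_one] using
    (integrableOn_Ioo_zero_one_iff_integrable_comp_sigmoid _).1 hbeta

lemma integral_sigmoid_cpow_mul_one_sub_sigmoid_cpow (a b : ℂ) :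
    ∫ t : ℝ, (Real.sigmoid t : ℂ) ^ a * (1 - (Real.sigmoid t : ℂ)) ^ b = betaIntegral a b := by
  rw [betaIntegral, intervalIntegral.integral_of_le zero_le_one, integral_Ioc_eq_integral_Ioo,
    integral_Ioo_zero_one_eq_integral_comp_sigmoid]
  simp only [sigmoid_mul_one_sub_smul_cpow_sub_one]

end Logistic

lemma sigmoid_two_mul_mul_one_sub (t : ℝ) :
    Real.sigmoid (2 * t) * (1 - Real.sigmoid (2 * t)) = (2 * Real.cosh t) ^ (-2 : ℝ) := by
  have hexp : Real.exp (-(2 * t)) = Real.exp (-t) ^ 2 := by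
    rw [← Real.exp_nat_mul]; ring_nf
  rw [Real.rpow_neg (by positivity), Real.rpow_two, Real.sigmoid_def, hexp, Real.cosh_eq,
    Real.exp_neg]
  field_simp
  ring

lemma cosh_cpow_neg_eq_sigmoid (w : ℂ) (t : ℝ) :
    (Real.cosh t : ℂ) ^ (-w) = 2 ^ w *
      ((Real.sigmoid (2 * t) : ℂ) ^ (w / 2) * (1 - (Real.sigmoid (2 * t) : ℂ)) ^ (w / 2)) := by
  have hcosh : 0 ≤ Real.cosh t := (Real.cosh_pos t).le
  have hσ : 0 ≤ 1 - Real.sigmoid (2 * t) := sub_nonneg.2 (Real.sigmoid_le_one _)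
  rw [← ofReal_one, ← ofReal_sub, ← mul_cpow_ofReal_nonneg (Real.sigmoid_nonneg _) hσ,
    ← ofReal_mul, sigmoid_two_mul_mul_one_sub, ← cpow_mul_ofReal_nonneg (by positivity),
    show ((-2 : ℝ) : ℂ) * (w / 2) = -w by push_cast; ring, ofReal_mul,
    mul_cpow_ofReal_nonneg two_pos.le hcosh, ofReal_ofNat, ← mul_assoc,
    ← cpow_add _ _ two_ne_zero, add_neg_cancel, cpow_zero, one_mul]

lemma integrable_cosh_cpow_neg {w : ℂ} (hw : 0 < w.re) :
    Integrable fun t : ℝ => (Real.cosh t : ℂ) ^ (-w) := by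
  have hw2 : 0 < (w / 2).re := by simpa using hw
  simp only [cosh_cpow_neg_eq_sigmoid]
  exact ((integrable_sigmoid_cpow_mul_one_sub_sigmoid_cpow hw2 hw2).comp_mul_left'
    two_ne_zero).const_mul _

lemma integral_cosh_cpow_neg (w : ℂ) :
    ∫ t : ℝ, (Real.cosh t : ℂ) ^ (-w) = 2 ^ (w - 1) * betaIntegral (w / 2) (w / 2) := by
  simp only [cosh_cpow_neg_eq_sigmoid]
  rw [integral_const_mul, Measure.integral_comp_mul_left (fun t : ℝ =>
      (Real.sigmoid t : ℂ) ^ (w / 2) * (1 - (Real.sigmoid t : ℂ)) ^ (w / 2)),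
    integral_sigmoid_cpow_mul_one_sub_sigmoid_cpow, cpow_sub _ _ two_ne_zero, cpow_one, real_smul,
    abs_of_pos (by positivity)]
  push_cast
  ring

section SumDifference

lemma map_add_sub_volume :
    Measure.map (fun p : ℝ × ℝ => (p.1 + p.2, p.1 - p.2)) volume
      = ENNReal.ofReal 2⁻¹ • volume := by
  let L : (ℝ × ℝ) →ₗ[ℝ] (ℝ × ℝ) :=
    Matrix.toLin (Module.Basis.finTwoProd ℝ) (Module.Basis.finTwoProd ℝ) !![1, 1; 1, -1]
  have hL : ⇑L = fun p : ℝ × ℝ => (p.1 + p.2, p.1 - p.2) := by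
    funext p
    simp [L, Matrix.toLin_finTwoProd_apply, sub_eq_add_neg]
  have hdet : LinearMap.det L = -2 := by
    rw [LinearMap.det_toLin, Matrix.det_fin_two_of]
    norm_num
  rw [← hL, Measure.map_linearMap_addHaar_eq_smul_addHaar _ (by simp [hdet]), hdet]
  norm_num

lemma measurableEmbedding_add_sub :
    MeasurableEmbedding fun p : ℝ × ℝ => (p.1 + p.2, p.1 - p.2) := by
  refine Continuous.measurableEmbedding (by fun_prop) fun p q hpq => ?_
  obtain ⟨hadd, hsub⟩ := Prod.mk.inj hpq
  ext <;> linarith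

variable {E : Type*} [NormedAddCommGroup E]

lemma integrable_comp_add_sub_iff {f : ℝ × ℝ → E} :
    Integrable (fun p : ℝ × ℝ => f (p.1 + p.2, p.1 - p.2)) ↔ Integrable f := by
  rw [← integrable_smul_measure (f := f) (c := ENNReal.ofReal 2⁻¹) (by simp) (by simp),
    ← map_add_sub_volume, measurableEmbedding_add_sub.integrable_map_iff, Function.comp_def]

lemma integral_comp_add_sub [NormedSpace ℝ E] (f : ℝ × ℝ → E) :
    ∫ p : ℝ × ℝ, f (p.1 + p.2, p.1 - p.2) = (2⁻¹ : ℝ) • ∫ p, f p := by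
  rw [← measurableEmbedding_add_sub.integral_map, map_add_sub_volume, integral_smul_measure,
    ENNReal.toReal_ofReal (by positivity)]

end SumDifference

lemma cosh_add_cosh_cpow_neg_add_sub (w : ℂ) (a b : ℝ) :
    ((Real.cosh (a + b) + Real.cosh (a - b) : ℝ) : ℂ) ^ (-w)
      = 2 ^ (-w) * ((Real.cosh a : ℂ) ^ (-w) * (Real.cosh b : ℂ) ^ (-w)) := by
  have ha := (Real.cosh_pos a).le
  have hb := (Real.cosh_pos b).le
  have hprod : Real.cosh (a + b) + Real.cosh (a - b) = 2 * (Real.cosh a * Real.cosh b) := by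
    rw [Real.cosh_add, Real.cosh_sub]; ring
  rw [hprod, ofReal_mul, mul_cpow_ofReal_nonneg two_pos.le (mul_nonneg ha hb), ofReal_mul,
    mul_cpow_ofReal_nonneg ha hb, ofReal_ofNat]

lemma integrable_cosh_add_cosh_cpow_neg {w : ℂ} (hw : 0 < w.re) :
    Integrable fun p : ℝ × ℝ => ((Real.cosh p.1 + Real.cosh p.2 : ℝ) : ℂ) ^ (-w) := by
  have hcosh := integrable_cosh_cpow_neg hw
  rw [← integrable_comp_add_sub_iff]
  simp only [cosh_add_cosh_cpow_neg_add_sub]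
  exact (hcosh.mul_prod hcosh).const_mul _

lemma integral_cosh_add_cosh_cpow_neg (w : ℂ) :
    ∫ p : ℝ × ℝ, ((Real.cosh p.1 + Real.cosh p.2 : ℝ) : ℂ) ^ (-w)
      = 2 ^ (w - 1) * betaIntegral (w / 2) (w / 2) ^ 2 := by
  have hhalf := integral_comp_add_sub fun p : ℝ × ℝ =>
    ((Real.cosh p.1 + Real.cosh p.2 : ℝ) : ℂ) ^ (-w)
  simp only [cosh_add_cosh_cpow_neg_add_sub] at hhalf
  have h2w : (2 : ℂ) ^ w ≠ 0 := cpow_ne_zero_iff.2 (Or.inl two_ne_zero)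
  rw [integral_const_mul, Measure.volume_eq_prod,
    integral_prod_mul (fun t : ℝ => (Real.cosh t : ℂ) ^ (-w)) fun t : ℝ =>
      (Real.cosh t : ℂ) ^ (-w), integral_cosh_cpow_neg, ← Measure.volume_eq_prod, real_smul,
    ofReal_inv, ofReal_ofNat, eq_inv_mul_iff_mul_eq₀ two_ne_zero] at hhalf
  rw [← hhalf, cpow_neg, cpow_sub _ _ two_ne_zero, cpow_one]
  field_simp

lemma integral_exp_neg_mul_cosh (y : ℝ) :
    ∫ t : ℝ, Real.exp (-y * Real.cosh t) = 2 * besselK0 y := by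
  have habs := integral_comp_abs (f := fun t => Real.exp (-y * Real.cosh t))
  simpa only [Real.cosh_abs, besselK0] using habs

lemma besselK0_sq_eq_integral (y : ℝ) :
    (besselK0 y : ℂ) ^ 2 = ∫ p : ℝ × ℝ,
      ((Real.exp (-((Real.cosh p.1 + Real.cosh p.2) * y)) : ℝ) : ℂ) • (1 / 4 : ℂ) := by
  have hsplit : ∀ p : ℝ × ℝ, Real.exp (-((Real.cosh p.1 + Real.cosh p.2) * y))
      = Real.exp (-y * Real.cosh p.1) * Real.exp (-y * Real.cosh p.2) := fun p => by
    rw [← Real.exp_add]; ring_nf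
  have hsq : ∫ p : ℝ × ℝ, Real.exp (-((Real.cosh p.1 + Real.cosh p.2) * y))
      = (2 * besselK0 y) ^ 2 := by
    simp only [hsplit]
    rw [Measure.volume_eq_prod, integral_prod_mul (fun t => Real.exp (-y * Real.cosh t))
      fun t => Real.exp (-y * Real.cosh t), integral_exp_neg_mul_cosh, sq]
  rw [integral_smul_const, integral_complex_ofReal, hsq, smul_eq_mul]
  push_cast
  ring

theorem hasMellin_besselK0_sq {w : ℂ} (hw : 0 < w.re) :
    HasMellin (fun y => (besselK0 y : ℂ) ^ 2) w
      (2 ^ (w - 3) * Gamma (w / 2) ^ 4 / Gamma w) := by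
  have hw2 : 0 < (w / 2).re := by simpa using hw
  have hΓ : Gamma w ≠ 0 := Gamma_ne_zero_of_re_pos hw
  have hexp := hasMellin_exp_neg hw
  have hsuper := hasMellin_integral_comp_mul_smul (by fun_prop) hexp.1
    (φ := fun p : ℝ × ℝ => Real.cosh p.1 + Real.cosh p.2) (by fun_prop)
    (.of_forall fun p => add_pos (Real.cosh_pos p.1) (Real.cosh_pos p.2))
    ((integrable_cosh_add_cosh_cpow_neg hw).smul_const (1 / 4 : ℂ))
  simp only [← besselK0_sq_eq_integral] at hsuper
  convert hsuper using 1
  rw [hexp.2, integral_smul_const, integral_cosh_add_cosh_cpow_neg,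
    betaIntegral_eq_Gamma_mul_div _ _ hw2 hw2, add_halves, cpow_sub _ _ two_ne_zero,
    cpow_sub _ _ two_ne_zero, cpow_one, cpow_ofNat, smul_eq_mul, smul_eq_mul]
  field_simp
  ring

/-- The Mellin transform of `g`: for `Re(s) > 0`, `∫₀^∞ g(x) x^{s−1} dx` converges
absolutely and equals `2^{s−2} Γ((1+s)/2)⁴ / (s Γ(1+s))`. -/
theorem gK0_mellin (s : ℂ) (hs : 0 < s.re) :
    IntegrableOn (fun x : ℝ => (gK0 x : ℂ) * (x : ℂ) ^ (s - 1)) (Set.Ioi 0) ∧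
    (∫ x in Set.Ioi (0 : ℝ), (gK0 x : ℂ) * (x : ℂ) ^ (s - 1))
      = 2 ^ (s - 2) * Complex.Gamma ((1 + s) / 2) ^ 4 / (s * Complex.Gamma (1 + s)) := by
  have hs1 : 0 < (s + 1).re := by rw [add_re, one_re]; positivity
  have hK := hasMellin_besselK0_sq hs1
  have hg : (fun x => ∫ y in Set.Ioi x, (besselK0 y : ℂ) ^ 2) = fun x => (gK0 x : ℂ) := by
    funext x
    simp only [gK0, ← ofReal_pow, integral_complex_ofReal]
  have hmellin := hasMellin_integral_Ioi hs hK.1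
  rw [hg, hK.2] at hmellin
  obtain ⟨hconv, hval⟩ := hmellin
  simp only [MellinConvergent, mellin, smul_eq_mul, mul_comm _ (gK0 _ : ℂ)] at hconv hval
  refine ⟨hconv, hval.trans ?_⟩
  rw [show s + 1 - 3 = s - 2 by ring, add_comm s 1, div_mul_div_comm, one_mul]
end

section
/- Let h(s) be the holomorphic extension to a neighborhood of 0 of s ↦ ζ(1+s) − 1/s, where ζ is the Riemann zeta function, and set γ₀ = h(0), γ₁ = h′(0). Let f be holomorphic on a neighborhood of 0. Then there exist a neighborhood U of 0 and a holomorphic function r on U such that for all s ∈ U with s ≠ 0: ζ(1+s)²·f(s)/s = f(0)/s³ + (2γ₀·f(0) + f′(0))/s² + ((γ₀² + 2γ₁)·f(0) + 2γ₀·f′(0) + f″(0)/2)/s + r(s). In particular, the residue at s = 0 of ζ(1+s)²·f(s)/s equals (γ₀² + 2γ₁)·f(0) + 2γ₀·f′(0) + f″(0)/2. -/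
open Complex Filter

/-!
If `Z s = c / s + h s` near `0`, then `s * Z s` extends to the analytic function
`u s = c + s * h s`, so `Z s ^ 2 * f s / s = (u ^ 2 * f) s / s ^ 3` and the principal part is read
off the second-order Taylor polynomial of `u ^ 2 * f` at `0`. The derivatives of `u` come from those
of `h` by a shift: `u 0 = c`, `deriv u 0 = h 0`, `iteratedDeriv 2 u 0 = 2 * deriv h 0`.
-/

open scoped Topology

section

variable {𝕜 : Type*} [NontriviallyNormedField 𝕜]

lemma exists_analyticAt_forall_div_pow_eq_sum_add [CharZero 𝕜] [CompleteSpace 𝕜] {g : 𝕜 → 𝕜}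
    (hg : AnalyticAt 𝕜 g 0) (n : ℕ) :
    ∃ r : 𝕜 → 𝕜, AnalyticAt 𝕜 r 0 ∧ ∀ s ≠ 0, g s / s ^ n =
      ∑ i ∈ Finset.range n, iteratedDeriv i g 0 / i.factorial / s ^ (n - i) + r s := by
  obtain ⟨r, hr, htaylor⟩ := hg.exists_eq_sum_add_pow_mul n
  refine ⟨r, hr, fun s hs ↦ ?_⟩
  rw [htaylor s, add_div, smul_eq_mul, mul_div_cancel_left₀ _ (pow_ne_zero n hs), Finset.sum_div]
  congr 1
  refine Finset.sum_congr rfl fun i hi ↦ ?_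
  rw [pow_sub₀ s hs (Finset.mem_range.mp hi).le, smul_eq_mul]
  field_simp

lemma iteratedDeriv_succ_id_mul_zero {h : 𝕜 → 𝕜} {n : ℕ} (hh : ContDiffAt 𝕜 (n + 1 : ℕ) h 0) :
    iteratedDeriv (n + 1) (fun s ↦ s * h s) 0 = (n + 1) * iteratedDeriv n h 0 := by
  rw [iteratedDeriv_fun_mul contDiffAt_fun_id hh, Finset.sum_eq_single 1]
  · simp [iteratedDeriv_fun_id_zero]
  · intro i _ hi
    simp [iteratedDeriv_fun_id_zero, hi]
  · simp

lemma deriv_sq_mul {u f : 𝕜 → 𝕜} {x : 𝕜} (hu : DifferentiableAt 𝕜 u x)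
    (hf : DifferentiableAt 𝕜 f x) :
    deriv (u ^ 2 * f) x = 2 * u x * deriv u x * f x + u x ^ 2 * deriv f x := by
  simp [deriv_mul (hu.pow 2) hf, deriv_pow hu 2]

lemma iteratedDeriv_two_mul {f g : 𝕜 → 𝕜} {x : 𝕜} (hf : ContDiffAt 𝕜 2 f x)
    (hg : ContDiffAt 𝕜 2 g x) :
    iteratedDeriv 2 (f * g) x =
      iteratedDeriv 2 f x * g x + 2 * deriv f x * deriv g x + f x * iteratedDeriv 2 g x := by
  simp only [iteratedDeriv_mul hf hg, Finset.sum_range_succ, Finset.sum_range_zero,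
    iteratedDeriv_zero, iteratedDeriv_one, Nat.choose_zero_right, Nat.choose_one_right,
    Nat.choose_self, Nat.cast_one, Nat.cast_ofNat, Nat.sub_zero, Nat.sub_self, Nat.add_one_sub_one]
  ring

lemma iteratedDeriv_two_sq_mul {u f : 𝕜 → 𝕜} {x : 𝕜} (hu : ContDiffAt 𝕜 2 u x)
    (hf : ContDiffAt 𝕜 2 f x) :
    iteratedDeriv 2 (u ^ 2 * f) x =
      2 * (deriv u x ^ 2 + u x * iteratedDeriv 2 u x) * f x + 4 * u x * deriv u x * deriv f x +
        u x ^ 2 * iteratedDeriv 2 f x := by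
  have hu' : DifferentiableAt 𝕜 u x := hu.differentiableAt two_ne_zero
  have huu : ContDiffAt 𝕜 2 (u * u) x := hu.mul hu
  rw [sq u, iteratedDeriv_two_mul huu hf, iteratedDeriv_two_mul hu hu, deriv_mul hu' hu',
    Pi.mul_apply]
  ring

theorem zeta_triple_pole_laurent_general [CharZero 𝕜] [CompleteSpace 𝕜] {Z h f : 𝕜 → 𝕜} {c : 𝕜}
    (hh : AnalyticAt 𝕜 h 0) (hZ : ∀ᶠ s in 𝓝[≠] 0, h s = Z s - c / s) (hf : AnalyticAt 𝕜 f 0) :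
    ∃ r : 𝕜 → 𝕜, AnalyticAt 𝕜 r 0 ∧ ∀ᶠ s in 𝓝[≠] 0,
      Z s ^ 2 * f s / s =
        c ^ 2 * f 0 / s ^ 3 + (2 * c * h 0 * f 0 + c ^ 2 * deriv f 0) / s ^ 2 +
          ((h 0 ^ 2 + 2 * c * deriv h 0) * f 0 + 2 * c * h 0 * deriv f 0 +
            c ^ 2 * iteratedDeriv 2 f 0 / 2) / s + r s := by
  let u : 𝕜 → 𝕜 := fun s ↦ c + s * h s
  have hu : AnalyticAt 𝕜 u 0 := by fun_prop
  have u_zero : u 0 = c := by simp [u]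
  have u_deriv : deriv u 0 = h 0 := by
    simpa [u] using iteratedDeriv_succ_id_mul_zero (n := 0) hh.contDiffAt
  have u_deriv_two : iteratedDeriv 2 u 0 = 2 * deriv h 0 := by
    simpa [u, iteratedDeriv_const_add, one_add_one_eq_two] using
      iteratedDeriv_succ_id_mul_zero (n := 1) hh.contDiffAt
  have sq_mul_deriv : deriv (u ^ 2 * f) 0 = 2 * c * h 0 * f 0 + c ^ 2 * deriv f 0 := by
    rw [deriv_sq_mul hu.differentiableAt hf.differentiableAt, u_zero, u_deriv]
  have sq_mul_deriv_two : iteratedDeriv 2 (u ^ 2 * f) 0 / 2 =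
      (h 0 ^ 2 + 2 * c * deriv h 0) * f 0 + 2 * c * h 0 * deriv f 0 +
        c ^ 2 * iteratedDeriv 2 f 0 / 2 := by
    rw [iteratedDeriv_two_sq_mul hu.contDiffAt hf.contDiffAt, u_zero, u_deriv, u_deriv_two]
    ring
  obtain ⟨r, hr, hlaurent⟩ := exists_analyticAt_forall_div_pow_eq_sum_add ((hu.pow 2).mul hf) 3
  refine ⟨r, hr, ?_⟩
  filter_upwards [hZ, self_mem_nhdsWithin] with s hs (hs0 : s ≠ 0)
  have clear_poles : Z s ^ 2 * f s / s = (u ^ 2 * f) s / s ^ 3 := by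
    simp only [u, Pi.mul_apply, Pi.pow_apply, hs]
    field_simp
    ring
  rw [clear_poles, hlaurent s hs0, ← sq_mul_deriv, ← sq_mul_deriv_two]
  simp [Finset.sum_range_succ, u_zero]

end

/-- Laurent expansion at the triple pole `s = 0` of `ζ(1+s)² f(s)/s`: if `h` is the
holomorphic extension near `0` of `s ↦ ζ(1+s) − 1/s`, with `γ₀ = h(0)`, `γ₁ = h′(0)`,
and `f` is holomorphic near `0`, then on a punctured neighborhood of `0`,
`ζ(1+s)² f(s)/s = f(0)/s³ + (2γ₀ f(0) + f′(0))/s²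
  + ((γ₀² + 2γ₁) f(0) + 2γ₀ f′(0) + f″(0)/2)/s + r(s)`
for some function `r` holomorphic near `0`; in particular the residue of
`ζ(1+s)² f(s)/s` at `s = 0` is `(γ₀² + 2γ₁) f(0) + 2γ₀ f′(0) + f″(0)/2`. -/
theorem zeta_triple_pole_laurent (h : ℂ → ℂ) (hh : AnalyticAt ℂ h 0)
    (hzeta : ∀ᶠ s in nhdsWithin (0 : ℂ) {0}ᶜ, h s = riemannZeta (1 + s) - 1 / s)
    (f : ℂ → ℂ) (hf : AnalyticAt ℂ f 0) :
    ∃ U ∈ nhds (0 : ℂ), ∃ r : ℂ → ℂ, (∀ s ∈ U, AnalyticAt ℂ r s) ∧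
      ∀ s ∈ U, s ≠ 0 →
        riemannZeta (1 + s) ^ 2 * f s / s
          = f 0 / s ^ 3 + (2 * h 0 * f 0 + deriv f 0) / s ^ 2 +
            ((h 0 ^ 2 + 2 * deriv h 0) * f 0 + 2 * h 0 * deriv f 0 +
              iteratedDeriv 2 f 0 / 2) / s + r s := by
  obtain ⟨r, hr, hlaurent⟩ := zeta_triple_pole_laurent_general hh hzeta hf
  exact ⟨_, hr.eventually_analyticAt.and (eventually_nhdsWithin_iff.mp hlaurent), r,
    fun s hs ↦ hs.1, fun s hs hs0 ↦ by simpa using hs.2 hs0⟩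
end
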